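/- For every nonzero semi-invariant f of the generalized Kronecker quiver, the leading monomial LM(f) is a finite product of leading monomials LM(f_{U^±}) of semi-invariants attached to primitive semi-standard linked tableaux pairs U^±; that is, the semi-invariants of primitive semi-standard linked tableaux pairs form a (possibly infinite) SAGBI basis of the semi-invariant ring. -/

import Mathlib

namespace QuiverSAGBI

/-- The variable `x^i_{jk}`: the `(j,k)` entry of the generic matrix `M_i`. -/
abbrev KVar (K r0 r1 : ℕ) := Fin K × Fin r1 × Fin r0

/-- The coordinate ring of the representation space of the generalized
Kronecker quiver with `K` arrows and dimension vector `(r0, r1)`. -/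
abbrev KPoly (K r0 r1 : ℕ) := MvPolynomial (KVar K r0 r1) ℂ

/-- `x_v` is a greater variable than `x_w`:  `v.1 < w.1`, or `v.1 = w.1` and
`v.2.1 < w.2.1`, or these agree and `v.2.2 < w.2.2`. -/
def VarGT {K r0 r1 : ℕ} (v w : KVar K r0 r1) : Prop :=
  v.1 < w.1 ∨ (v.1 = w.1 ∧ (v.2.1 < w.2.1 ∨ (v.2.1 = w.2.1 ∧ v.2.2 < w.2.2)))

/-- The monomial with exponent vector `a` is smaller than the one with exponent
vector `b` in the lexicographic term order: at the most significant variable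
where they differ, `a` has the smaller exponent. -/
def MonLT {K r0 r1 : ℕ} (a b : KVar K r0 r1 →₀ ℕ) : Prop :=
  ∃ v, a v < b v ∧ ∀ w, VarGT w v → a w = b w

/-- `mo` is the leading monomial (exponent vector) of `f`. -/
def IsLM {K r0 r1 : ℕ} (f : KPoly K r0 r1) (mo : KVar K r0 r1 →₀ ℕ) : Prop :=
  mo ∈ f.support ∧ ∀ m' ∈ f.support, m' = mo ∨ MonLT m' mo

/-- The substitution action of a pair of matrices `(g, h)` on the coordinate
ring: `x^i_{jk} ↦ ∑ (h⁻¹)_{j j'} x^i_{j'k'} g_{k' k}`, i.e. `M_i ↦ h⁻¹ M_i g`. -/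
noncomputable def glAct {K r0 r1 : ℕ} (g : Matrix (Fin r0) (Fin r0) ℂ)
    (h : Matrix (Fin r1) (Fin r1) ℂ) : KPoly K r0 r1 →ₐ[ℂ] KPoly K r0 r1 :=
  MvPolynomial.aeval fun v : KVar K r0 r1 =>
    ∑ j' : Fin r1, ∑ k' : Fin r0,
      MvPolynomial.C (h⁻¹ v.2.1 j' * g k' v.2.2) * MvPolynomial.X (v.1, j', k')

/-- `f` is a semi-invariant of weight `(w0, w1)`. -/
def IsSemiInvariant {K r0 r1 : ℕ} (f : KPoly K r0 r1) (w0 w1 : ℤ) : Prop :=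
  ∀ (g : Matrix (Fin r0) (Fin r0) ℂ) (h : Matrix (Fin r1) (Fin r1) ℂ),
    IsUnit g.det → IsUnit h.det →
      glAct g h f = MvPolynomial.C (g.det ^ w0 * h.det ^ w1) * f

/-- The semi-invariant ring: the linear span of all semi-invariants. -/
noncomputable def semiInvariantRing (K r0 r1 : ℕ) : Submodule ℂ (KPoly K r0 r1) :=
  Submodule.span ℂ {f | ∃ w0 w1 : ℤ, IsSemiInvariant f w0 w1}

/-- A linked tableaux pair for the generalized Kronecker quiver:
`Tm` is the tableau `T⁻` (with `r0` rows and `cm` columns, labels `(i,q)`),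
`Tp` is the tableau `T⁺` (with `r1` rows and `cp` columns, labels `(i,p)`),
and `link` is a bijection of boxes sending the box labeled `(i,q)` in row `p`
of `T⁻` to a box labeled `(i,p)` lying in row `q` of `T⁺`. -/
structure LinkedPair (K r0 r1 cm cp : ℕ) where
  Tm : Fin r0 → Fin cm → Fin K × Fin r1
  Tp : Fin r1 → Fin cp → Fin K × Fin r0
  link : Fin r0 × Fin cm ≃ Fin r1 × Fin cp
  link_row : ∀ p c, (link (p, c)).1 = (Tm p c).2
  link_label : ∀ p c, Tp (link (p, c)).1 (link (p, c)).2 = ((Tm p c).1, p)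

/-- The exponent vector of `Mon(T⁺)`: a box labeled `(i,k)` in row `q` of `T⁺`
contributes the variable `x^i_{qk}`. -/
noncomputable def monExpP {K r0 r1 cm cp : ℕ} (L : LinkedPair K r0 r1 cm cp) :
    KVar K r0 r1 →₀ ℕ :=
  ∑ q : Fin r1, ∑ c : Fin cp, Finsupp.single ((L.Tp q c).1, q, (L.Tp q c).2) 1

/-- The exponent vector of `Mon(T⁻)`: a box labeled `(i,j)` in row `p` of `T⁻`
contributes the variable `x^i_{jp}`. -/
noncomputable def monExpM {K r0 r1 cm cp : ℕ} (L : LinkedPair K r0 r1 cm cp) :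
    KVar K r0 r1 →₀ ℕ :=
  ∑ p : Fin r0, ∑ c : Fin cm, Finsupp.single ((L.Tm p c).1, (L.Tm p c).2, p) 1

/-- The semi-invariant `f_{T^±}` attached to a linked tableaux pair:
`∑_{α⁻, α⁺} sign(α⁻) sign(α⁺) Mon(α⁻ · α⁺ · T⁺)`, where `α⁺` permutes the
entries of each column of `T⁺` among its rows and `α⁻` permutes the second
entries of the labels of the boxes of `T⁺` linked to each column of `T⁻`. -/
noncomputable def pairPoly {K r0 r1 cm cp : ℕ} (L : LinkedPair K r0 r1 cm cp) :
    KPoly K r0 r1 :=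
  ∑ αm : Fin cm → Equiv.Perm (Fin r0), ∑ αp : Fin cp → Equiv.Perm (Fin r1),
    ((∏ l, (Equiv.Perm.sign (αm l) : ℤ)) * ∏ c, (Equiv.Perm.sign (αp c) : ℤ)) •
      ∏ p : Fin r0, ∏ l : Fin cm,
        MvPolynomial.X
          ((L.Tm p l).1, αp (L.link (p, l)).2 (L.link (p, l)).1, αm l p)

/-- The order on labels: `(i,p) ≤ (j,q)` iff `i < j`, or `i = j` and `p ≤ q`. -/
def LabelLE {K n : ℕ} (a b : Fin K × Fin n) : Prop :=
  a.1 < b.1 ∨ (a.1 = b.1 ∧ a.2 ≤ b.2)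

/-- Strict version of the label order. -/
def LabelLT {K n : ℕ} (a b : Fin K × Fin n) : Prop :=
  a.1 < b.1 ∨ (a.1 = b.1 ∧ a.2 < b.2)

/-- A rectangular tableau is semi-standard if its entries are weakly increasing
along each row and strictly increasing down each column. -/
def IsSemiStandardTab {rows cols K n : ℕ}
    (T : Fin rows → Fin cols → Fin K × Fin n) : Prop :=
  (∀ (i : Fin rows) (c c' : Fin cols), c ≤ c' → LabelLE (T i c) (T i c')) ∧
  (∀ (c : Fin cols) (i i' : Fin rows), i < i' → LabelLT (T i c) (T i' c))

/-- The link is semi-standard: boxes with equal labels in the same row of `T⁻`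
are matched with their partners in `T⁺` in a left-to-right
order-preserving way. -/
def IsSemiStandardLink {K r0 r1 cm cp : ℕ}
    (L : LinkedPair K r0 r1 cm cp) : Prop :=
  ∀ (p : Fin r0) (c c' : Fin cm), L.Tm p c = L.Tm p c' → c < c' →
    (L.link (p, c)).2 < (L.link (p, c')).2

/-- A semi-standard linked tableaux pair: both tableaux and the link are
semi-standard. -/
def IsSemiStandardPair {K r0 r1 cm cp : ℕ}
    (L : LinkedPair K r0 r1 cm cp) : Prop :=
  IsSemiStandardTab L.Tm ∧ IsSemiStandardTab L.Tp ∧ IsSemiStandardLink L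

/-- A (nonempty) semi-standard linked tableaux pair is primitive if its leading
monomial is not the product of the leading monomials of two (nonempty)
semi-standard linked tableaux pairs. -/
def IsPrimitive {K r0 r1 cm cp : ℕ} (L : LinkedPair K r0 r1 cm cp) : Prop :=
  IsSemiStandardPair L ∧ 0 < cm ∧
    ¬∃ (cm1 cp1 cm2 cp2 : ℕ) (L1 : LinkedPair K r0 r1 cm1 cp1)
        (L2 : LinkedPair K r0 r1 cm2 cp2) (m m1 m2 : KVar K r0 r1 →₀ ℕ),
        0 < cm1 ∧ 0 < cm2 ∧ IsSemiStandardPair L1 ∧ IsSemiStandardPair L2 ∧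
        IsLM (pairPoly L) m ∧ IsLM (pairPoly L1) m1 ∧ IsLM (pairPoly L2) m2 ∧
        m = m1 + m2

/-!
An element `f` of the semi-invariant ring is fixed by `SL × SL`. Substituting `v j ↦ z j * u j`
turns its invariance under the transvections `v j ↦ v j + t * u j` into the invariance of
polynomials in `z` under the translations `z j ↦ z j + t`. In such a polynomial the
lexicographically smallest monomial `z ^ b` satisfies `∑ j ≤ l, b j ≤ ∑ j < l, (e j - b j)`, where
`e` bounds the exponents: passing to the lowest power of `z l` divides out `z l ^ b l` and
restores at most `e l - b l` to the degree in `t`. Hence each row of the leading exponent of `f`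
dominates the following ones, for the rows of `(M_1 | … | M_K)` and for those of `(M_1, …, M_K)ᵀ`;
diagonal matrices show that the rows have equal sums. This is what it takes for the exponent to be
that of `Mon(T⁺)` for a semi-standard pair.

Conversely `Mon(T⁺)` is the leading monomial of `f_{T^±}`. For a fixed arrow, let `X` and `Y` be
sets of columns of `T⁻` and `T⁺`. A box in the corner `q < Q`, `p < P` has `p < P` and lies in
`X`, or has `q < Q` and lies in `Y`, or lies in neither, and permuting the columns of
semi-standard tableaux increases none of the three counts as long as the earlier arrows tie. A
suitable choice of `X` and `Y` makes the bound sharp for `Mon(T⁺)`, whose corners are therefore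
the largest. In a tie `α⁻` and `α⁺` are the same permutation of the boxes, so that the signs
multiply to `1` and `Mon(T⁺)` does not cancel.

Finally, the leading monomial of a pair that is not primitive is the product of those of two pairs
with fewer columns, so that induction on the number of columns applies.
-/

section Translation

open MvPolynomial

variable {R : Type*} [CommRing R]

lemma coeff_coeff_swap (P : Polynomial (Polynomial R)) (i j : ℕ) :
    ((Polynomial.Bivariate.swap P).coeff i).coeff j = (P.coeff j).coeff i := by
  induction P using Polynomial.induction_on' with
  | add P Q hP hQ => simp only [map_add, Polynomial.coeff_add, hP, hQ]
  | monomial n p =>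
    induction p using Polynomial.induction_on' with
    | add p q hp hq => simp only [map_add, Polynomial.coeff_add, hp, hq]
    | monomial m a =>
      simp only [Polynomial.Bivariate.swap_monomial_monomial, Polynomial.coeff_monomial]
      split_ifs <;> simp_all [Polynomial.coeff_monomial]

lemma natDegree_eval_X_le (P : Polynomial (Polynomial R)) :
    (P.eval Polynomial.X).natDegree ≤
      P.natDegree + (Polynomial.Bivariate.swap P).natDegree := by
  rw [Polynomial.eval_eq_sum_range]
  refine Polynomial.natDegree_sum_le_of_forall_le _ _ fun j hj => ?_
  have hcoeff : (P.coeff j).natDegree ≤ (Polynomial.Bivariate.swap P).natDegree :=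
    Polynomial.natDegree_le_iff_coeff_eq_zero.2 fun i hi => by
      rw [← coeff_coeff_swap, Polynomial.coeff_eq_zero_of_natDegree_lt hi, Polynomial.coeff_zero]
  calc (P.coeff j * Polynomial.X ^ j).natDegree
      ≤ (P.coeff j).natDegree + j := Polynomial.natDegree_mul_le_of_le le_rfl
        (Polynomial.natDegree_X_pow_le j)
    _ ≤ P.natDegree + (Polynomial.Bivariate.swap P).natDegree := by
      have := Finset.mem_range.1 hj
      omega

variable {ι : Type*}

/-- Translation of a polynomial in the direction `w`, as a polynomial in the length of the
translation: `G ↦ G (X + T w)`. -/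
noncomputable def shift (w : ι → R) : MvPolynomial ι R →ₐ[R] Polynomial (MvPolynomial ι R) :=
  aeval fun j => Polynomial.C (X j) + Polynomial.C (C (w j)) * Polynomial.X

@[simp]
lemma shift_X (w : ι → R) (j : ι) :
    shift w (X j) = Polynomial.C (X j) + Polynomial.C (C (w j)) * Polynomial.X :=
  aeval_X _ _

@[simp]
lemma shift_C (w : ι → R) (a : R) : shift w (C a) = Polynomial.C (C a) :=
  aeval_C _ _

lemma eval_zero_shift (w : ι → R) (G : MvPolynomial ι R) : (shift w G).eval 0 = G := by
  have : (Polynomial.evalRingHom 0).comp (shift w).toRingHom = RingHom.id (MvPolynomial ι R) := by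
    ext j <;> simp
  exact congrArg (· G) this

lemma shift_injective (w : ι → R) : Function.Injective (shift w) :=
  Function.LeftInverse.injective (g := Polynomial.eval 0) (eval_zero_shift w)

lemma swap_map_shift (w w' : ι → R) (G : MvPolynomial ι R) :
    Polynomial.Bivariate.swap ((shift w' G).map (shift w).toRingHom) =
      (shift w G).map (shift w').toRingHom := by
  have : (Polynomial.Bivariate.swap.toRingHom.comp
      (Polynomial.mapRingHom (shift w).toRingHom)).comp (shift w').toRingHom =
      (Polynomial.mapRingHom (shift w').toRingHom).comp (shift w).toRingHom := by
    refine MvPolynomial.ringHom_ext (fun a => ?_) fun j => ?_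
    · simp only [AlgHom.toRingHom_eq_coe, RingHom.comp_apply,
        RingHom.coe_coe, shift_C, Polynomial.coe_mapRingHom, Polynomial.map_C]
      exact Polynomial.Bivariate.swap_C_C _
    · simp only [AlgHom.toRingHom_eq_coe, RingHom.comp_apply, RingHom.coe_coe, shift_X,
        Polynomial.coe_mapRingHom, Polynomial.map_add, Polynomial.map_mul, Polynomial.map_C,
        Polynomial.map_X, shift_C]
      change Polynomial.Bivariate.swap _ = _
      simp only [map_add, map_mul, Polynomial.Bivariate.swap_C, Polynomial.Bivariate.swap_Y,
        Polynomial.map_C, Polynomial.map_X]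
      ring
  exact congrArg (· G) this

lemma eval_X_map_shift (w w' : ι → R) (G : MvPolynomial ι R) :
    ((shift w' G).map (shift w).toRingHom).eval Polynomial.X = shift (w + w') G := by
  have : ((Polynomial.evalRingHom Polynomial.X).comp
      (Polynomial.mapRingHom (shift w).toRingHom)).comp (shift w').toRingHom =
      (shift (w + w')).toRingHom := by
    ext j
    · simp
    · simp [add_mul, add_assoc]
  exact congrArg (· G) this

lemma natDegree_shift_add_le (w w' : ι → R) (G : MvPolynomial ι R) :
    (shift (w + w') G).natDegree ≤ (shift w G).natDegree + (shift w' G).natDegree := by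
  rw [← eval_X_map_shift, add_comm]
  refine (natDegree_eval_X_le _).trans (add_le_add Polynomial.natDegree_map_le ?_)
  rw [swap_map_shift]
  exact Polynomial.natDegree_map_le

lemma natDegree_shift_single_le [DecidableEq ι] (l : ι) (c : R) (G : MvPolynomial ι R) :
    (shift (Pi.single l c) G).natDegree ≤ G.degreeOf l := by
  rw [G.as_sum, map_sum, ← G.as_sum]
  refine Polynomial.natDegree_sum_le_of_forall_le _ _ fun m hm => ?_
  rw [monomial_eq, Finsupp.prod, map_mul, map_prod, shift_C]
  refine (Polynomial.natDegree_C_mul_le _ _).trans ((Polynomial.natDegree_prod_le _ _).trans ?_)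
  have hfactor (j : ι) : (shift (Pi.single l c) (X j ^ m j)).natDegree ≤
      if j = l then m l else 0 := by
    rw [map_pow, shift_X]
    split_ifs with h
    · subst h
      exact (Polynomial.natDegree_pow_le_of_le _ (by compute_degree)).trans_eq (mul_one _)
    · rw [Pi.single_eq_of_ne h, C_0, Polynomial.C_0, zero_mul, add_zero, ← Polynomial.C_pow,
        Polynomial.natDegree_C]
  calc ∑ j ∈ m.support, (shift (Pi.single l c) (X j ^ m j)).natDegree
      ≤ ∑ j ∈ m.support, if j = l then m l else 0 := Finset.sum_le_sum fun j _ => hfactor j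
    _ ≤ m l := by rw [Finset.sum_ite_eq']; split_ifs <;> omega
    _ ≤ G.degreeOf l := monomial_le_degreeOf l hm

lemma natDegree_shift_X_pow_mul {w : ι → R} {l : ι} (hw : w l = 1) (n : ℕ)
    {G : MvPolynomial ι R} (hG : G ≠ 0) :
    (shift w (X l ^ n * G)).natDegree = n + (shift w G).natDegree := by
  have : Nontrivial R := nontrivial_of_ne 1 0 fun h => hG (by
    rw [← one_mul G, ← C_1, h, C_0, zero_mul])
  have hmonic : (shift w (X l)).Monic := by
    rw [shift_X, hw, C_1, Polynomial.C_1, one_mul, add_comm]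
    exact Polynomial.monic_X_add_C _
  have hdeg : (shift w (X l)).natDegree = 1 := by
    rw [shift_X, hw, C_1, Polynomial.C_1, one_mul, add_comm, Polynomial.natDegree_X_add_C]
  rw [map_mul, map_pow, (hmonic.pow n).natDegree_mul'
    ((map_ne_zero_iff _ (shift_injective w)).2 hG), hmonic.natDegree_pow, hdeg, mul_one]

/-- The specialization of a polynomial at `X j = 0` for all `j ∈ s`. -/
noncomputable def kill [DecidableEq ι] (s : Finset ι) : MvPolynomial ι R →ₐ[R] MvPolynomial ι R :=
  aeval fun j => if j ∈ s then 0 else X j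

lemma coeff_kill [DecidableEq ι] (s : Finset ι) (G : MvPolynomial ι R) (x : ι →₀ ℕ) :
    coeff x (kill s G) = if ∀ j ∈ s, x j = 0 then coeff x G else 0 := by
  induction G using MvPolynomial.induction_on' with
  | add G H hG hH => simp only [map_add, coeff_add, hG, hH]; split_ifs <;> simp
  | monomial m a =>
    rw [kill, aeval_monomial, coeff_monomial]
    by_cases hm : ∀ j ∈ s, m j = 0
    · have : (m.prod fun j k => (if j ∈ s then (0 : MvPolynomial ι R) else X j) ^ k) =
          m.prod fun j k => X j ^ k := Finsupp.prod_congr fun j hj => by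
        rw [if_neg fun hjs => Finsupp.mem_support_iff.1 hj (hm j hjs)]
      rw [this, algebraMap_eq, ← monomial_eq, coeff_monomial]
      split_ifs with h h' <;> simp_all
    · push Not at hm
      obtain ⟨j, hjs, hj⟩ := hm
      rw [Finsupp.prod, Finset.prod_eq_zero (Finsupp.mem_support_iff.2 hj) (by
        rw [if_pos hjs, zero_pow hj]), mul_zero, coeff_zero]
      split_ifs with h h' <;> simp_all

lemma shift_one_kill [DecidableEq ι] (l : ι) (G : MvPolynomial ι R) :
    shift 1 (kill {l} G) = (shift (1 + Pi.single l (-1)) G).map (kill {l}).toRingHom := by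
  have : (shift 1).toRingHom.comp (kill {l}).toRingHom =
      (Polynomial.mapRingHom (kill {l}).toRingHom).comp
        (shift (1 + Pi.single l (-1) : ι → R)).toRingHom := by
    refine MvPolynomial.ringHom_ext (fun a => ?_) fun j => ?_
    · simp
    · by_cases h : j = l
      · subst h
        simp [kill]
      · simp [kill, h]
  exact congrArg (· G) this

lemma X_pow_mul_divMonomial {l : ι} {n : ℕ} {G : MvPolynomial ι R}
    (hn : ∀ x ∈ G.support, n ≤ x l) : X l ^ n * G.divMonomial (Finsupp.single l n) = G := by
  ext x
  rw [X_pow_eq_monomial, coeff_monomial_mul', coeff_divMonomial]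
  split_ifs with h
  · rw [add_tsub_cancel_of_le h, one_mul]
  · by_contra hx
    exact h (Finsupp.single_le_iff.2 (hn x (mem_support_iff.2 (Ne.symm hx))))

variable [DecidableEq ι]

/-- The coefficient of `∏ j ∈ s, X j ^ b j` in `G`, where `G` is seen as a polynomial in the
variables of `s`. -/
noncomputable def partialCoeff (s : Finset ι) (b : ι →₀ ℕ) (G : MvPolynomial ι R) :
    MvPolynomial ι R :=
  kill s (G.divMonomial (b.filter (· ∈ s)))

lemma coeff_partialCoeff (s : Finset ι) (b x : ι →₀ ℕ) (G : MvPolynomial ι R) :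
    coeff x (partialCoeff s b G) =
      if ∀ j ∈ s, x j = 0 then coeff (b.filter (· ∈ s) + x) G else 0 := by
  rw [partialCoeff, coeff_kill, coeff_divMonomial]

lemma partialCoeff_empty (b : ι →₀ ℕ) (G : MvPolynomial ι R) : partialCoeff ∅ b G = G := by
  ext x
  have hfilter : b.filter (· ∈ (∅ : Finset ι)) = 0 := Finsupp.filter_eq_zero_iff _ _ |>.2 (by simp)
  rw [coeff_partialCoeff, if_pos (by simp), hfilter, zero_add]

lemma partialCoeff_ne_zero (s : Finset ι) {b : ι →₀ ℕ} {G : MvPolynomial ι R}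
    (hb : b ∈ G.support) : partialCoeff s b G ≠ 0 := by
  refine ne_zero_iff.2 ⟨b.filter (· ∉ s), ?_⟩
  rw [coeff_partialCoeff, if_pos fun j hj => by simp [hj], Finsupp.filter_add_filter_not]
  exact mem_support_iff.1 hb

lemma partialCoeff_insert {s : Finset ι} {l : ι} (hl : l ∉ s) (b : ι →₀ ℕ)
    (G : MvPolynomial ι R) :
    partialCoeff (insert l s) b G =
      kill {l} ((partialCoeff s b G).divMonomial (Finsupp.single l (b l))) := by
  have hfilter : b.filter (· ∈ insert l s) = b.filter (· ∈ s) + Finsupp.single l (b l) := by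
    ext j
    by_cases hj : j = l
    · subst hj; simp [hl]
    · by_cases hjs : j ∈ s <;> simp [hj, hjs]
  have hcond (x : ι →₀ ℕ) : (∀ j ∈ s, (Finsupp.single l (b l) + x) j = 0) ↔ ∀ j ∈ s, x j = 0 :=
    forall₂_congr fun j hj => by
      rw [Finsupp.add_apply, Finsupp.single_eq_of_ne (ne_of_mem_of_not_mem hj hl), zero_add]
  ext x
  rw [coeff_partialCoeff, coeff_kill, coeff_divMonomial, coeff_partialCoeff, hfilter, add_assoc,
    ← ite_and]
  refine if_congr ?_ rfl rfl
  rw [Finset.forall_mem_insert, hcond]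
  simp only [Finset.mem_singleton, forall_eq]

lemma natDegree_shift_one_kill_add_le {l : ι} {n e : ℕ} {G : MvPolynomial ι R} (hG : G ≠ 0)
    (hn : ∀ x ∈ G.support, n ≤ x l) (he : ∀ x ∈ G.support, x l ≤ e) :
    (shift 1 (kill {l} (G.divMonomial (Finsupp.single l n)))).natDegree + n ≤
      (shift 1 G).natDegree + (e - n) := by
  set H := G.divMonomial (Finsupp.single l n)
  have hGH : X l ^ n * H = G := X_pow_mul_divMonomial hn
  have hH : H ≠ 0 := fun h => hG (by rw [← hGH, h, mul_zero])
  have hdegree : H.degreeOf l ≤ e - n := degreeOf_le_iff.2 fun x hx => by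
    have := he _ (mem_support_iff.2 (coeff_divMonomial _ G x ▸ mem_support_iff.1 hx))
    rw [Finsupp.add_apply, Finsupp.single_eq_same] at this
    omega
  have hkill : (shift 1 (kill {l} H)).natDegree ≤ (shift 1 H).natDegree + H.degreeOf l := by
    rw [shift_one_kill]
    exact Polynomial.natDegree_map_le.trans ((natDegree_shift_add_le _ _ _).trans
      (Nat.add_le_add_left (natDegree_shift_single_le _ _ _) _))
  have hmul : (shift 1 G).natDegree = n + (shift 1 H).natDegree := by
    rw [← hGH, natDegree_shift_X_pow_mul (by rfl) n hH]
  omega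

end Translation

section LexMin

open MvPolynomial

variable {R ι : Type*} [CommRing R] [LinearOrder ι] {F : MvPolynomial ι R} {b : ι →₀ ℕ}

lemma mem_support_of_mem_support_partialCoeff {s : Finset ι} {x : ι →₀ ℕ}
    (hx : x ∈ (partialCoeff s b F).support) :
    (∀ j ∈ s, x j = 0) ∧ b.filter (· ∈ s) + x ∈ F.support := by
  rw [mem_support_iff, coeff_partialCoeff] at hx
  split_ifs at hx with h
  · exact ⟨h, mem_support_iff.2 hx⟩
  · exact absurd rfl hx

lemma le_apply_of_mem_support_partialCoeff {s : Finset ι} {l : ι} (hls : l ∉ s)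
    (hs : ∀ i < l, i ∈ s)
    (hmin : ∀ x ∈ F.support, x = b ∨ ∃ j, b j < x j ∧ ∀ i < j, x i = b i) {x : ι →₀ ℕ}
    (hx : x ∈ (partialCoeff s b F).support) : b l ≤ x l := by
  obtain ⟨hxs, hxF⟩ := mem_support_of_mem_support_partialCoeff hx
  set y := b.filter (· ∈ s) + x with hy
  have hyl : y l = x l := by simp [hy, hls]
  rw [← hyl]
  obtain hyb | ⟨j, hj, hlt⟩ := hmin y hxF
  · rw [hyb]
  · have hjs : j ∉ s := fun hjs => hj.ne (by simp [hy, hjs, hxs j hjs])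
    obtain rfl | hlj := (not_lt.1 fun hjl => hjs (hs j hjl)).eq_or_lt
    · exact hj.le
    · exact (hlt l hlj).ge

lemma natDegree_shift_one_partialCoeff_le {e : ι → ℕ}
    (hF : (shift 1 F).natDegree = 0) (he : ∀ x ∈ F.support, ∀ j, x j ≤ e j) (hb : b ∈ F.support)
    (hmin : ∀ x ∈ F.support, x = b ∨ ∃ j, b j < x j ∧ ∀ i < j, x i = b i)
    {s : Finset ι} (hs : IsLowerSet (s : Set ι)) :
    (shift 1 (partialCoeff s b F)).natDegree + ∑ j ∈ s, b j ≤ ∑ j ∈ s, (e j - b j) := by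
  induction s using Finset.induction_on_max with
  | empty => simp [partialCoeff_empty, hF]
  | insert l s hlt ih =>
    have hls : l ∉ s := fun h => (hlt l h).false
    have hbelow : ∀ i < l, i ∈ s := fun i hi =>
      Finset.mem_of_mem_insert_of_ne (Finset.mem_coe.1 (hs hi.le (by simp))) hi.ne
    have hlower : IsLowerSet (s : Set ι) := fun i j hji hi => hbelow j (hji.trans_lt (hlt i hi))
    have hstep := natDegree_shift_one_kill_add_le (e := e l) (partialCoeff_ne_zero s hb)
      (fun x hx => le_apply_of_mem_support_partialCoeff hls hbelow hmin hx)
      (fun x hx => by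
        have := he _ (mem_support_of_mem_support_partialCoeff hx).2 l
        rw [Finsupp.add_apply] at this
        omega)
    have := ih hlower
    rw [partialCoeff_insert hls, Finset.sum_insert hls, Finset.sum_insert hls]
    omega

theorem sum_le_sum_of_lex_min [Fintype ι] {e : ι → ℕ}
    (hF : (shift 1 F).natDegree = 0) (he : ∀ x ∈ F.support, ∀ j, x j ≤ e j) (hb : b ∈ F.support)
    (hmin : ∀ x ∈ F.support, x = b ∨ ∃ j, b j < x j ∧ ∀ i < j, x i = b i) (l : ι) :
    ∑ j with j ≤ l, b j ≤ ∑ j with j < l, (e j - b j) := by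
  set s : Finset ι := {j | j < l} with hs
  have hls : l ∉ s := by simp [hs]
  have hbelow : ∀ i < l, i ∈ s := fun i hi => by simpa [hs] using hi
  have hdegree := natDegree_shift_one_partialCoeff_le hF he hb hmin (s := s)
    fun i j hji hi => hbelow j (hji.trans_lt (by simpa [hs] using hi))
  have hdvd : b l ≤ (shift 1 (partialCoeff s b F)).natDegree := by
    rw [← X_pow_mul_divMonomial fun x hx =>
      le_apply_of_mem_support_partialCoeff hls hbelow hmin hx,
      natDegree_shift_X_pow_mul (by rfl)]
    · exact Nat.le_add_right _ _
    · intro h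
      apply partialCoeff_ne_zero s hb
      rw [← X_pow_mul_divMonomial fun x hx =>
        le_apply_of_mem_support_partialCoeff hls hbelow hmin hx, h, mul_zero]
  have hinsert : ({j | j ≤ l} : Finset ι) = insert l s := by
    ext j; simp [hs, le_iff_eq_or_lt]
  rw [hinsert, Finset.sum_insert hls]
  omega

end LexMin

section Shear

open MvPolynomial

variable {R σ ι : Type*} [CommRing R] {u v : ι ↪ σ}

/-- The substitution `X (v j) ↦ X (v j) + t X (u j)`, fixing the variables outside the range
of `v`. -/
noncomputable def shear (u v : ι ↪ σ) (t : R) : MvPolynomial σ R →ₐ[R] MvPolynomial σ R :=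
  aeval fun w => X w + Function.extend v (fun j => C t * X (u j)) 0 w

/-- The substitution `X (v j) ↦ z j X (u j)` into polynomials over `R[z]`. It turns shears into
translations of `z`. -/
noncomputable def dehomogenize (u v : ι ↪ σ) :
    MvPolynomial σ R →ₐ[R] MvPolynomial σ (MvPolynomial ι R) :=
  aeval fun w => C (Function.extend v X 1 w) * X (Function.extend v u id w)

lemma dehomogenize_shear (huv : ∀ i j, u i ≠ v j) (t : R) (f : MvPolynomial σ R) :
    dehomogenize u v (shear u v t f) =
      map ((Polynomial.evalRingHom (C t)).comp (shift 1).toRingHom) (dehomogenize u v f) := by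
  have : (dehomogenize u v).toRingHom.comp (shear u v t).toRingHom =
      (map ((Polynomial.evalRingHom (C t)).comp (shift 1).toRingHom)).comp
        (dehomogenize (R := R) u v).toRingHom := by
    have hu (i : ι) : ¬ ∃ j, v j = u i := fun ⟨j, h⟩ => huv i j h.symm
    refine MvPolynomial.ringHom_ext (fun a => ?_) fun w => ?_
    · simp [dehomogenize, shear, MvPolynomial.algebraMap_apply]
    · by_cases hw : ∃ j, v j = w
      · obtain ⟨j, rfl⟩ := hw
        simp [dehomogenize, shear, v.injective.extend_apply, Function.extend_apply' _ _ _ (hu j),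
          MvPolynomial.algebraMap_apply, add_mul]
      · simp [dehomogenize, shear, Function.extend_apply' _ _ _ hw]
  exact congrArg (· f) this

lemma natDegree_shift_one_coeff_dehomogenize [IsDomain R] [Infinite R] (huv : ∀ i j, u i ≠ v j)
    {f : MvPolynomial σ R} (hf : ∀ t, shear u v t f = f) (g : σ →₀ ℕ) :
    (shift 1 (coeff g (dehomogenize u v f))).natDegree = 0 := by
  set F := coeff g (dehomogenize u v f)
  have heval (t : R) : (shift 1 F).eval (C t) = F := by
    have := congrArg (coeff g) (dehomogenize_shear huv t f)
    rw [hf t, coeff_map] at this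
    exact this.symm
  have hconst : shift 1 F = Polynomial.C F :=
    Polynomial.eq_of_infinite_eval_eq _ _ <|
      (Set.infinite_range_of_injective (C_injective ι R)).mono <| by
        rintro _ ⟨t, rfl⟩
        rw [Set.mem_ofPred_eq, heval, Polynomial.eval_C]
  rw [hconst, Polynomial.natDegree_C]

lemma dehomogenize_monomial (m : σ →₀ ℕ) (a : R) :
    dehomogenize u v (monomial m a) =
      monomial (m.mapDomain (Function.extend v u id))
        (monomial (m.comapDomain v v.injective.injOn) a) := by
  induction m using Finsupp.induction_linear generalizing a with
  | zero => simp [← C_apply, dehomogenize, MvPolynomial.algebraMap_apply]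
  | add m m' hm hm' =>
    have hmul : monomial (m + m') a = monomial m a * monomial m' 1 := by simp
    rw [hmul, map_mul, hm, hm', monomial_mul, monomial_mul, mul_one, Finsupp.mapDomain_add,
      Finsupp.comapDomain_add_of_injective v.injective]
  | single w n =>
    rw [← C_mul_X_pow_eq_monomial, map_mul, map_pow, Finsupp.mapDomain_single]
    by_cases hw : ∃ j, v j = w
    · obtain ⟨j, rfl⟩ := hw
      rw [Finsupp.comapDomain_single, v.injective.extend_apply]
      simp [dehomogenize, v.injective.extend_apply, MvPolynomial.algebraMap_apply, mul_pow,
        ← C_mul_X_pow_eq_monomial, mul_assoc]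
    · rw [Finsupp.comapDomain_single_of_not_mem_range hw, Function.extend_apply' _ _ _ hw]
      simp [dehomogenize, Function.extend_apply' _ _ _ hw, MvPolynomial.algebraMap_apply,
        ← C_mul_X_pow_eq_monomial]

open Classical in
lemma mapDomain_extend (m : σ →₀ ℕ) :
    m.mapDomain (Function.extend v u id) =
      m.filter (· ∉ Set.range v) + (m.comapDomain v v.injective.injOn).mapDomain u := by
  induction m using Finsupp.induction_linear with
  | zero =>
    rw [Finsupp.mapDomain_zero, Finsupp.comapDomain_zero, Finsupp.mapDomain_zero,
      Finsupp.filter_zero, add_zero]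
  | add m m' hm hm' =>
    rw [Finsupp.mapDomain_add, hm, hm', Finsupp.filter_add,
      Finsupp.comapDomain_add_of_injective v.injective, Finsupp.mapDomain_add]
    abel
  | single w n =>
    rw [Finsupp.mapDomain_single]
    by_cases hw : w ∈ Set.range v
    · rw [Finsupp.filter_single_of_neg (· ∉ Set.range v) (not_not.2 hw), zero_add]
      obtain ⟨j, rfl⟩ := hw
      rw [Finsupp.comapDomain_single, v.injective.extend_apply, Finsupp.mapDomain_single]
    · rw [Finsupp.filter_single_of_pos (· ∉ Set.range v) hw,
        Finsupp.comapDomain_single_of_not_mem_range hw, Finsupp.mapDomain_zero, add_zero,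
        Function.extend_apply' _ _ _ hw, id]

lemma mapDomain_extend_apply_left (huv : ∀ i j, u i ≠ v j) (m : σ →₀ ℕ) (j : ι) :
    m.mapDomain (Function.extend v u id) (u j) = m (u j) + m (v j) := by
  classical
  have hu : u j ∉ Set.range v := fun ⟨i, h⟩ => huv j i h.symm
  rw [mapDomain_extend, Finsupp.add_apply, Finsupp.filter_apply, if_pos hu,
    Finsupp.mapDomain_apply u.injective, Finsupp.comapDomain_apply]

lemma mapDomain_extend_apply_of_notMem {w : σ} (hu : w ∉ Set.range u) (hv : w ∉ Set.range v)
    (m : σ →₀ ℕ) : m.mapDomain (Function.extend v u id) w = m w := by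
  classical
  rw [mapDomain_extend, Finsupp.add_apply, Finsupp.filter_apply, if_pos hv,
    Finsupp.mapDomain_of_notMem_range _ _ hu, add_zero]

lemma eq_of_mapDomain_extend_eq {m m' : σ →₀ ℕ}
    (hmap : m.mapDomain (Function.extend v u id) = m'.mapDomain (Function.extend v u id))
    (hcomap : m.comapDomain v v.injective.injOn = m'.comapDomain v v.injective.injOn) :
    m = m' := by
  classical
  rw [mapDomain_extend, mapDomain_extend, hcomap] at hmap
  have hfilter := add_right_cancel hmap
  ext w
  by_cases hw : w ∈ Set.range v
  · obtain ⟨j, rfl⟩ := hw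
    exact DFunLike.congr_fun hcomap j
  · simpa only [Finsupp.filter_apply, if_pos hw] using DFunLike.congr_fun hfilter w

lemma coeff_coeff_dehomogenize (f : MvPolynomial σ R) (m : σ →₀ ℕ) :
    coeff (m.comapDomain v v.injective.injOn)
      (coeff (m.mapDomain (Function.extend v u id)) (dehomogenize u v f)) = coeff m f := by
  classical
  induction f using MvPolynomial.induction_on' with
  | add f g hf hg => simp only [map_add, coeff_add, hf, hg]
  | monomial m' a =>
    rw [dehomogenize_monomial, coeff_monomial, coeff_monomial]
    by_cases h : m' = m
    · simp [h]
    · rw [if_neg h]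
      split_ifs with hmap
      · rw [coeff_monomial, if_neg fun hcomap => h (eq_of_mapDomain_extend_eq hmap hcomap)]
      · rw [coeff_zero]

lemma exists_of_mem_support_coeff_dehomogenize {f : MvPolynomial σ R} {g : σ →₀ ℕ} {x : ι →₀ ℕ}
    (hx : x ∈ (coeff g (dehomogenize u v f)).support) :
    ∃ m ∈ f.support, m.mapDomain (Function.extend v u id) = g ∧
      m.comapDomain v v.injective.injOn = x := by
  classical
  by_contra! h
  refine mem_support_iff.1 hx ?_
  rw [f.as_sum, map_sum, coeff_sum, coeff_sum]
  refine Finset.sum_eq_zero fun m hm => ?_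
  rw [dehomogenize_monomial, coeff_monomial]
  split_ifs with hmap
  · rw [coeff_monomial, if_neg (h m hm hmap)]
  · rw [coeff_zero]

variable [LinearOrder ι] {gt : σ → σ → Prop}

lemma lex_comapDomain_of_lex (huv : ∀ i j, u i ≠ v j) (hu : ∀ i j, i < j → gt (u i) (u j))
    (hv : ∀ j, gt (u j) (v j)) {m m₀ : σ →₀ ℕ}
    (hmap : m.mapDomain (Function.extend v u id) = m₀.mapDomain (Function.extend v u id))
    (hlex : ∃ w, m w < m₀ w ∧ ∀ w', gt w' w → m w' = m₀ w') :
    ∃ j, m₀ (v j) < m (v j) ∧ ∀ i < j, m (v i) = m₀ (v i) := by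
  have hsum (j : ι) : m (u j) + m (v j) = m₀ (u j) + m₀ (v j) := by
    simpa only [mapDomain_extend_apply_left huv] using DFunLike.congr_fun hmap (u j)
  obtain ⟨w, hlt, heq⟩ := hlex
  by_cases hwu : w ∈ Set.range u
  · obtain ⟨j, rfl⟩ := hwu
    refine ⟨j, by have := hsum j; omega, fun i hij => ?_⟩
    have := hsum i
    have := heq (u i) (hu i j hij)
    omega
  by_cases hwv : w ∈ Set.range v
  · obtain ⟨j, rfl⟩ := hwv
    have := hsum j
    have := heq (u j) (hv j)
    omega
  · have := DFunLike.congr_fun hmap w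
    rw [mapDomain_extend_apply_of_notMem hwu hwv, mapDomain_extend_apply_of_notMem hwu hwv] at this
    omega

theorem sum_le_sum_of_shear_invariant [IsDomain R] [Infinite R] [Fintype ι]
    (huv : ∀ i j, u i ≠ v j) (hu : ∀ i j, i < j → gt (u i) (u j)) (hv : ∀ j, gt (u j) (v j))
    {f : MvPolynomial σ R} (hf : ∀ t, shear u v t f = f) {m₀ : σ →₀ ℕ} (hm₀ : m₀ ∈ f.support)
    (hmax : ∀ m ∈ f.support, m = m₀ ∨ ∃ w, m w < m₀ w ∧ ∀ w', gt w' w → m w' = m₀ w') (l : ι) :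
    ∑ j with j ≤ l, m₀ (v j) ≤ ∑ j with j < l, m₀ (u j) := by
  set g := m₀.mapDomain (Function.extend v u id)
  have hmem : m₀.comapDomain v v.injective.injOn ∈ (coeff g (dehomogenize u v f)).support := by
    rw [mem_support_iff, coeff_coeff_dehomogenize]
    exact mem_support_iff.1 hm₀
  have hsum := sum_le_sum_of_lex_min (e := fun j => m₀ (u j) + m₀ (v j))
    (natDegree_shift_one_coeff_dehomogenize huv hf g) (fun x hx j => ?_) hmem (fun x hx => ?_) l
  · simpa using hsum
  · obtain ⟨m, -, hmap, rfl⟩ := exists_of_mem_support_coeff_dehomogenize hx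
    have := DFunLike.congr_fun hmap (u j)
    simp only [g, mapDomain_extend_apply_left huv] at this
    rw [Finsupp.comapDomain_apply]
    omega
  · obtain ⟨m, hm, hmap, rfl⟩ := exists_of_mem_support_coeff_dehomogenize hx
    refine (hmax m hm).imp (fun h => by rw [h]) fun hlex => ?_
    simpa only [Finsupp.comapDomain_apply] using lex_comapDomain_of_lex huv hu hv hmap hlex

end Shear

section SpecialLinear

open MvPolynomial

variable {R σ ρ α : Type*}

/-- The variables in the row `p`. -/
def rowEmb (e : ρ × α ≃ σ) (p : ρ) : α ↪ σ :=
  (Function.Embedding.sectR p α).trans e.toEmbedding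

@[simp]
lemma rowEmb_apply (e : ρ × α ≃ σ) (p : ρ) (a : α) : rowEmb e p a = e (p, a) := rfl

variable [Fintype ρ]

/-- The action of a matrix on the polynomials in the entries of a matrix, whose rows are indexed
by `ρ` and whose entries are the variables in `σ`. -/
noncomputable def matSubst [CommRing R] (e : ρ × α ≃ σ) (g : Matrix ρ ρ R) :
    MvPolynomial σ R →ₐ[R] MvPolynomial σ R :=
  aeval fun w => ∑ p, C (g p (e.symm w).1) * X (e (p, (e.symm w).2))

variable [DecidableEq ρ]

lemma matSubst_transvection [CommRing R] (e : ρ × α ≃ σ) {p p' : ρ} (h : p ≠ p') (t : R) :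
    matSubst e (Matrix.transvection p p' t) = shear (rowEmb e p) (rowEmb e p') t := by
  refine algHom_ext fun w => ?_
  obtain ⟨⟨q, a⟩, rfl⟩ := e.surjective w
  rw [matSubst, shear, aeval_X, aeval_X, Equiv.symm_apply_apply]
  by_cases hq : q = p'
  · subst hq
    have := (rowEmb e q).injective.extend_apply (fun j => C t * X (rowEmb e p j)) 0 a
    rw [rowEmb_apply, rowEmb_apply] at this
    rw [this]
    simp [Matrix.transvection, Matrix.one_apply, Matrix.single_apply, add_mul,
      Finset.sum_add_distrib, apply_ite C]
  · have : ¬ ∃ b, rowEmb e p' b = e (q, a) := by simp [Ne.symm hq]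
    rw [Function.extend_apply' _ _ _ this]
    simp [Matrix.transvection, Matrix.one_apply, Ne.symm hq]

lemma coeff_matSubst_diagonal [CommRing R] [Fintype α] (e : ρ × α ≃ σ) (d : ρ → R)
    (f : MvPolynomial σ R) (m : σ →₀ ℕ) :
    coeff m (matSubst e (Matrix.diagonal d) f) = (∏ p, d p ^ ∑ a, m (e (p, a))) * coeff m f := by
  have hmonomial (m : σ →₀ ℕ) (c : R) : matSubst e (Matrix.diagonal d) (monomial m c) =
      monomial m ((∏ p, d p ^ ∑ a, m (e (p, a))) * c) := by
    have hX (w : σ) : (∑ p, C (Matrix.diagonal d p (e.symm w).1) * X (e (p, (e.symm w).2)) :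
        MvPolynomial σ R) = C (d (e.symm w).1) * X w := by
      rw [Finset.sum_eq_single (e.symm w).1 (fun p _ hp => by
        rw [Matrix.diagonal_apply_ne _ hp, C_0, zero_mul]) (by simp), Matrix.diagonal_apply_eq,
        Prod.mk.eta, e.apply_symm_apply]
    have : Fintype σ := Fintype.ofEquiv _ e
    have hprod : m.prod (fun w k => d (e.symm w).1 ^ k) = ∏ p, d p ^ ∑ a, m (e (p, a)) := by
      rw [Finsupp.prod_fintype _ _ fun w => pow_zero _, ← e.prod_comp, Fintype.prod_prod_type]
      simp only [Equiv.symm_apply_apply, Finset.prod_pow_eq_pow_sum]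
    rw [matSubst, aeval_monomial]
    simp only [hX, mul_pow, Finsupp.prod_mul, ← C_pow]
    rw [← hprod, algebraMap_eq, Finsupp.prod, ← map_prod, ← mul_assoc, ← C_mul, mul_comm c,
      ← monomial_eq, Finsupp.prod]
  classical
  induction f using MvPolynomial.induction_on' with
  | add f g hf hg => simp only [map_add, coeff_add, hf, hg, mul_add]
  | monomial m' c =>
    rw [hmonomial, coeff_monomial, coeff_monomial]
    split_ifs with h
    · rw [h]
    · rw [mul_zero]

/-- The two families of conditions met by the leading exponent of a polynomial invariant under
the special linear group acting on the rows: all rows have the same sum, and each row dominates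
the following ones. They say that the exponent is the content of a semi-standard tableau. -/
structure IsDominant [LinearOrder ρ] [LinearOrder α] [Fintype α] (e : ρ × α ≃ σ) (m : σ →₀ ℕ) :
    Prop where
  sum_row_eq : ∀ p p', ∑ a, m (e (p, a)) = ∑ a, m (e (p', a))
  sum_le_sum : ∀ p p', p < p' → ∀ l,
    ∑ a with a ≤ l, m (e (p', a)) ≤ ∑ a with a < l, m (e (p, a))

lemma sum_row_eq_of_invariant [Field R] [CharZero R] [Fintype α] {e : ρ × α ≃ σ}
    {f : MvPolynomial σ R} (hf : ∀ g : Matrix ρ ρ R, g.det = 1 → matSubst e g f = f)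
    {m : σ →₀ ℕ} (hm : m ∈ f.support) (p p' : ρ) :
    ∑ a, m (e (p, a)) = ∑ a, m (e (p', a)) := by
  have hdiag (c : ρ → ℕ) :
      ∏ q, (Pi.mulSingle p 2 * Pi.mulSingle p' 2⁻¹ : ρ → R) q ^ c q = 2 ^ c p * 2⁻¹ ^ c p' := by
    simp only [Pi.mul_apply, mul_pow, Finset.prod_mul_distrib]
    congr 1
    · rw [Finset.prod_eq_single p (by simp_all) (by simp),
        Pi.mulSingle_eq_same]
    · rw [Finset.prod_eq_single p' (by simp_all) (by simp),
        Pi.mulSingle_eq_same]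
  have hdet : (Matrix.diagonal (Pi.mulSingle p 2 * Pi.mulSingle p' 2⁻¹ : ρ → R)).det = 1 := by
    have := hdiag 1
    simpa [Matrix.det_diagonal] using this
  have hcoeff := congrArg (coeff m) (hf _ hdet)
  rw [coeff_matSubst_diagonal, hdiag, mul_eq_right₀ (mem_support_iff.1 hm), inv_pow,
    mul_inv_eq_one₀ (pow_ne_zero _ two_ne_zero)] at hcoeff
  exact Nat.pow_right_injective le_rfl (by exact_mod_cast hcoeff)

theorem isDominant_of_invariant [Field R] [CharZero R] [LinearOrder ρ] [LinearOrder α]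
    [Fintype α] {e : ρ × α ≃ σ} {gt : σ → σ → Prop}
    (hcol : ∀ p a b, a < b → gt (e (p, a)) (e (p, b)))
    (hrow : ∀ p p' a, p < p' → gt (e (p, a)) (e (p', a)))
    {f : MvPolynomial σ R} (hf : ∀ g : Matrix ρ ρ R, g.det = 1 → matSubst e g f = f)
    {m : σ →₀ ℕ} (hm : m ∈ f.support)
    (hmax : ∀ m' ∈ f.support, m' = m ∨ ∃ w, m' w < m w ∧ ∀ w', gt w' w → m' w' = m w') :
    IsDominant e m where
  sum_row_eq := sum_row_eq_of_invariant hf hm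
  sum_le_sum p p' hp l := sum_le_sum_of_shear_invariant (u := rowEmb e p) (v := rowEmb e p')
    (by simp [hp.ne]) (fun a b => hcol p a b) (fun a => hrow p p' a hp)
    (fun t => by
      rw [← matSubst_transvection e hp.ne]
      exact hf _ (Matrix.det_transvection_of_ne p p' hp.ne t)) hm hmax l

end SpecialLinear

section LeadingMonomial

open MvPolynomial

variable {K r0 r1 : ℕ}

/-- The variables of the coordinate ring as the entries of the matrix `(M_1, …, M_K)ᵀ`, on whose
rows the group of the vertex `0` acts. -/
def minusVar : Fin r0 × (Fin K ×ₗ Fin r1) ≃ KVar K r0 r1 where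
  toFun x := ((ofLex x.2).1, (ofLex x.2).2, x.1)
  invFun v := (v.2.2, toLex (v.1, v.2.1))

/-- The variables of the coordinate ring as the entries of the block matrix `(M_1 | … | M_K)`, on
whose rows the group of the vertex `1` acts. -/
def plusVar : Fin r1 × (Fin K ×ₗ Fin r0) ≃ KVar K r0 r1 where
  toFun x := ((ofLex x.2).1, x.1, (ofLex x.2).2)
  invFun v := (v.2.1, toLex (v.1, v.2.2))

lemma glAct_one_right (g : Matrix (Fin r0) (Fin r0) ℂ) :
    glAct (K := K) (r1 := r1) g 1 = matSubst minusVar g := by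
  refine algHom_ext fun v => ?_
  rw [glAct, matSubst, aeval_X, aeval_X, Finset.sum_eq_single v.2.1 (fun j _ hj => ?_) (by simp)]
  · simp only [inv_one, Matrix.one_apply_eq, one_mul]
    rfl
  · simp [Matrix.one_apply_ne hj.symm]

lemma glAct_one_left (h : Matrix (Fin r1) (Fin r1) ℂ) :
    glAct (K := K) (r0 := r0) 1 h = matSubst plusVar h⁻¹.transpose := by
  refine algHom_ext fun v => ?_
  rw [glAct, matSubst, aeval_X, aeval_X]
  refine Finset.sum_congr rfl fun j _ => ?_
  rw [Finset.sum_eq_single v.2.2 (fun k _ hk => ?_) (by simp)]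
  · simp only [Matrix.one_apply_eq, mul_one]
    rfl
  · simp [Matrix.one_apply_ne hk]

lemma glAct_eq_self {f : KPoly K r0 r1} (hf : f ∈ semiInvariantRing K r0 r1)
    {g : Matrix (Fin r0) (Fin r0) ℂ} {h : Matrix (Fin r1) (Fin r1) ℂ}
    (hg : g.det = 1) (hh : h.det = 1) : glAct g h f = f := by
  induction hf using Submodule.span_induction with
  | mem f hf =>
    obtain ⟨w0, w1, hf⟩ := hf
    rw [hf g h (by simp [hg]) (by simp [hh]), hg, hh, one_zpow, one_zpow, one_mul, C_1, one_mul]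
  | zero => rw [map_zero]
  | add f g _ _ hf hg => rw [map_add, hf, hg]
  | smul c f _ hf => rw [map_smul, hf]

theorem isDominant_minusVar {f : KPoly K r0 r1} (hf : f ∈ semiInvariantRing K r0 r1)
    {m : KVar K r0 r1 →₀ ℕ} (hm : IsLM f m) : IsDominant minusVar m := by
  refine isDominant_of_invariant (gt := VarGT) (fun p a b hab => ?_) (fun p p' a hp => ?_)
    (fun g hg => ?_) hm.1 hm.2
  · obtain h | ⟨h, h'⟩ := Prod.Lex.lt_iff.1 hab
    · exact Or.inl h
    · exact Or.inr ⟨h, Or.inl h'⟩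
  · exact Or.inr ⟨rfl, Or.inr ⟨rfl, hp⟩⟩
  · rw [← glAct_one_right]
    exact glAct_eq_self hf hg Matrix.det_one

theorem isDominant_plusVar {f : KPoly K r0 r1} (hf : f ∈ semiInvariantRing K r0 r1)
    {m : KVar K r0 r1 →₀ ℕ} (hm : IsLM f m) : IsDominant plusVar m := by
  refine isDominant_of_invariant (gt := VarGT) (fun p a b hab => ?_) (fun p p' a hp => ?_)
    (fun g hg => ?_) hm.1 hm.2
  · obtain h | ⟨h, h'⟩ := Prod.Lex.lt_iff.1 hab
    · exact Or.inl h
    · exact Or.inr ⟨h, Or.inr ⟨rfl, h'⟩⟩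
  · exact Or.inr ⟨rfl, Or.inl hp⟩
  · have : g = (g⁻¹.transpose)⁻¹.transpose := by
      rw [← Matrix.transpose_nonsing_inv, Matrix.transpose_transpose,
        Matrix.nonsing_inv_nonsing_inv _ (by simp [hg])]
    rw [this, ← glAct_one_left]
    exact glAct_eq_self hf Matrix.det_one (by simp [Matrix.det_nonsing_inv, hg])

end LeadingMonomial

section Tableau

open Finset

variable {ρ α σ : Type*} [LinearOrder α] {e : ρ × α ≃ σ} {m : σ → ℕ} {c : ℕ}

/-- A labelling of the boxes of a tableau with `c` columns, whose rows are indexed by `ρ`, by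
`m w` copies of each variable `w = e (p, a)`, such that the copies of `w` lie in row `p`, the
labels `a` increase weakly along the rows, and the copies of `w` are numbered from left to right. -/
structure IsFilling (e : ρ × α ≃ σ) (E : ρ × Fin c ≃ Σ w, Fin (m w)) : Prop where
  row : ∀ b, (e.symm (E b).1).1 = b.1
  monotone : ∀ p, Monotone fun x => (e.symm (E (p, x)).1).2
  lt_iff : ∀ b b', (E b).1 = (E b').1 → (b.2 < b'.2 ↔ ((E b).2 : ℕ) < (E b').2)

variable (e) in
lemma exists_isFilling [Fintype α] (hc : ∀ p, ∑ a, m (e (p, a)) = c) :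
    ∃ E : ρ × Fin c ≃ Σ w, Fin (m w), IsFilling e E := by
  have hcard (p : ρ) : Fintype.card (Σₗ a, Fin (m (e (p, a)))) = c := by
    rw [← hc p, Fintype.card_congr ofLex, Fintype.card_sigma]
    simp only [Fintype.card_fin]
  let f (p : ρ) := Fintype.orderIsoFinOfCardEq _ (hcard p)
  let inRow (p : ρ) : (Σ a, Fin (m (e (p, a)))) → Σ w, Fin (m w) :=
    Sigma.map (fun a => e (p, a)) fun _ => id
  have hinRow (p : ρ) : Function.Injective (inRow p) :=
    (e.injective.comp (Prod.mk_right_injective p)).sigma_map fun _ => Function.injective_id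
  have hE : Function.Bijective fun b : ρ × Fin c => inRow b.1 (ofLex (f b.1 b.2)) := by
    refine ⟨fun ⟨p, x⟩ ⟨p', y⟩ h => ?_, fun ⟨w, k⟩ => ?_⟩
    · obtain rfl : p = p' := congrArg Prod.fst (e.injective (congrArg Sigma.fst h))
      exact Prod.ext rfl ((f p).injective (ofLex.injective (hinRow p h)))
    · obtain ⟨⟨p, a⟩, rfl⟩ := e.surjective w
      exact ⟨(p, (f p).symm (toLex ⟨a, k⟩)),
        congrArg (fun s => inRow p (ofLex s)) ((f p).apply_symm_apply _)⟩
  refine ⟨Equiv.ofBijective _ hE, fun b => ?_, fun p x y hxy => ?_, fun ⟨p, x⟩ ⟨p', y⟩ h => ?_⟩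
  · simp [inRow, Sigma.map]
  · change (e.symm (e (p, (ofLex (f p x)).1))).2 ≤ (e.symm (e (p, (ofLex (f p y)).1))).2
    rw [e.symm_apply_apply, e.symm_apply_apply]
    obtain h | ⟨h, -⟩ := Sigma.Lex.le_def.1 ((f p).monotone hxy)
    · exact h.le
    · exact h.le
  · obtain rfl : p = p' := congrArg Prod.fst (e.injective h)
    have hlabel : (ofLex (f p x)).1 = (ofLex (f p y)).1 := congrArg Prod.snd (e.injective h)
    change _ ↔ ((ofLex (f p x)).2 : ℕ) < (ofLex (f p y)).2
    rw [← (f p).lt_iff_lt, Sigma.Lex.lt_def]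
    generalize f p x = s, f p y = t at hlabel
    obtain ⟨a, k⟩ := s
    obtain ⟨b, l⟩ := t
    obtain rfl : a = b := hlabel
    exact ⟨fun h => h.elim (fun h => absurd h (lt_irrefl _)) fun ⟨_, h⟩ => h,
      fun h => Or.inr ⟨rfl, h⟩⟩

namespace IsFilling

variable {E : ρ × Fin c ≃ Σ w, Fin (m w)}

lemma apply_label (hE : IsFilling e E) (p : ρ) (x : Fin c) :
    e (p, (e.symm (E (p, x)).1).2) = (E (p, x)).1 := by
  rw [← Equiv.eq_symm_apply]
  exact Prod.ext (hE.row (p, x)).symm rfl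

lemma card_label_eq (hE : IsFilling e E) (p : ρ) (a : α) :
    #{x | (e.symm (E (p, x)).1).2 = a} = m (e (p, a)) := by
  have hsymm (k : Fin (m (e (p, a)))) : E (p, (E.symm ⟨e (p, a), k⟩).2) = ⟨e (p, a), k⟩ := by
    have := hE.row (E.symm ⟨e (p, a), k⟩)
    rw [E.apply_symm_apply, e.symm_apply_apply] at this
    rw [← Equiv.eq_symm_apply]
    exact Prod.ext this rfl
  rw [← card_fin (m (e (p, a)))]
  refine (card_bij (fun k _ => (E.symm ⟨e (p, a), k⟩).2) (fun k _ => ?_) (fun k _ k' _ h => ?_)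
    fun x hx => ?_).symm
  · rw [mem_filter, hsymm, e.symm_apply_apply]
    exact ⟨mem_univ _, rfl⟩
  · have := hsymm k
    rw [h, hsymm k'] at this
    exact (eq_of_heq (Sigma.mk.inj this).2).symm
  · have hw := hE.apply_label p x
    rw [(mem_filter.1 hx).2] at hw
    generalize hs : E (p, x) = s at hw
    obtain ⟨w, k⟩ := s
    subst hw
    exact ⟨k, mem_univ _, by rw [← hs, E.symm_apply_apply]⟩

lemma card_label_mem (hE : IsFilling e E) (p : ρ) (s : Finset α) :
    #{x | (e.symm (E (p, x)).1).2 ∈ s} = ∑ a ∈ s, m (e (p, a)) := by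
  rw [← sum_card_fiberwise_eq_card_filter]
  exact sum_congr rfl fun a _ => hE.card_label_eq p a

lemma label_lt_label [LinearOrder ρ] [Fintype α] {m : σ →₀ ℕ} {E : ρ × Fin c ≃ Σ w, Fin (m w)}
    (hE : IsFilling e E) (hm : IsDominant e m) {p p' : ρ} (hp : p < p') (x : Fin c) :
    (e.symm (E (p, x)).1).2 < (e.symm (E (p', x)).1).2 := by
  by_contra! hle
  have hsum := hm.sum_le_sum p p' hp (e.symm (E (p', x)).1).2
  rw [← hE.card_label_mem, ← hE.card_label_mem] at hsum
  have hlower : Iic x ⊆ ({y | (e.symm (E (p', y)).1).2 ∈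
      ({a | a ≤ (e.symm (E (p', x)).1).2} : Finset α)} : Finset (Fin c)) := fun y hy => by
    simpa using hE.monotone p' (mem_Iic.1 hy)
  have hupper : ({y | (e.symm (E (p, y)).1).2 ∈
      ({a | a < (e.symm (E (p', x)).1).2} : Finset α)} : Finset (Fin c)) ⊆ Iio x := fun y hy => by
    simp only [mem_filter, mem_univ, true_and] at hy
    rw [mem_Iio]
    by_contra! hxy
    exact (hy.trans_le hle).not_ge (hE.monotone p hxy)
  have := (card_le_card hlower).trans (hsum.trans (card_le_card hupper))
  rw [Fin.card_Iic, Fin.card_Iio] at this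
  omega

lemma symm_lt_symm (hE : IsFilling e E) {s t : Σ w, Fin (m w)} (hst : s.1 = t.1)
    (hlt : (s.2 : ℕ) < t.2) : (E.symm s).2 < (E.symm t).2 := by
  have := hE.lt_iff (E.symm s) (E.symm t)
  rw [E.apply_symm_apply, E.apply_symm_apply] at this
  exact (this hst).2 hlt

lemma isSemiStandardTab {K r n : ℕ} {e : Fin r × (Fin K ×ₗ Fin n) ≃ σ} {m : σ →₀ ℕ}
    {E : Fin r × Fin c ≃ Σ w, Fin (m w)} (hE : IsFilling e E) (hm : IsDominant e m) :
    IsSemiStandardTab fun p x => ofLex (e.symm (E (p, x)).1).2 :=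
  ⟨fun p _ _ h => Prod.Lex.le_iff.1 (hE.monotone p h),
    fun x _ _ h => Prod.Lex.lt_iff.1 (hE.label_lt_label hm h x)⟩

end IsFilling

theorem exists_isSemiStandardPair_monExpM_eq {K r0 r1 : ℕ} (h0 : 1 ≤ r0) (h1 : 1 ≤ r1)
    {m : KVar K r0 r1 →₀ ℕ} (hM : IsDominant minusVar m) (hP : IsDominant plusVar m) :
    ∃ (cm cp : ℕ) (L : LinkedPair K r0 r1 cm cp), IsSemiStandardPair L ∧ monExpM L = m := by
  obtain ⟨EM, hEM⟩ := exists_isFilling minusVar fun p => hM.sum_row_eq p ⟨0, h0⟩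
  obtain ⟨EP, hEP⟩ := exists_isFilling plusVar fun q => hP.sum_row_eq q ⟨0, h1⟩
  have hlink (b) : EP ((EM.trans EP.symm) b) = EM b := EP.apply_symm_apply _
  let L : LinkedPair K r0 r1 _ _ :=
    { Tm p x := ofLex (minusVar.symm (EM (p, x)).1).2
      Tp q y := ofLex (plusVar.symm (EP (q, y)).1).2
      link := EM.trans EP.symm
      link_row p x := by
        rw [← hEP.row, hlink]
        rfl
      link_label p x := by
        rw [Prod.mk.eta, hlink]
        exact congrArg (Prod.mk _) (hEM.row (p, x)) }
  refine ⟨_, _, L, ⟨hEM.isSemiStandardTab hM, hEP.isSemiStandardTab hP, fun p x y hT hxy => ?_⟩, ?_⟩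
  · have hvar : (EM (p, x)).1 = (EM (p, y)).1 := by
      rw [← hEM.apply_label p x, ofLex.injective hT, hEM.apply_label p y]
    exact hEP.symm_lt_symm hvar ((hEM.lt_iff _ _ hvar).1 hxy)
  · calc monExpM L = ∑ b, Finsupp.single (EM b).1 1 := by
          rw [monExpM, ← Fintype.sum_prod_type']
          exact sum_congr rfl fun b _ => congrArg (Finsupp.single · 1) (hEM.apply_label b.1 b.2)
      _ = ∑ w, ∑ _k : Fin (m w), Finsupp.single w 1 := by
          rw [EM.sum_comp fun s => Finsupp.single s.1 1, Fintype.sum_sigma]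
      _ = m := by
          simp only [sum_const, card_univ, Fintype.card_fin, Finsupp.smul_single, smul_eq_mul,
            mul_one]
          exact Finsupp.univ_sum_single m

end Tableau

section Counting

open Finset

variable {β γ δ : Type*}

lemma card_filter_and_mem_eq_sum [DecidableEq γ] (s : Finset β) (A : β → Prop) [DecidablePred A]
    (f : β → γ) (t : Finset γ) :
    #{b ∈ s | A b ∧ f b ∈ t} = ∑ x ∈ t, #{b ∈ s | A b ∧ f b = x} := by
  simp only [← filter_filter, sum_card_fiberwise_eq_card_filter]

lemma card_filter_mem_eq_of_fiberwise [DecidableEq γ] {s : Finset β} {f g : β → γ} {t : Finset γ}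
    (h : ∀ x ∈ t, #{b ∈ s | f b = x} = #{b ∈ s | g b = x}) :
    #{b ∈ s | f b ∈ t} = #{b ∈ s | g b ∈ t} := by
  simpa only [sum_card_fiberwise_eq_card_filter] using sum_congr rfl h

lemma card_fiber_eq_of_le [DecidableEq γ] {s t : Finset β} (f : β → γ)
    (hle : ∀ x, #{b ∈ s | f b = x} ≤ #{b ∈ t | f b = x}) (heq : #s = #t) (x : γ) :
    #{b ∈ s | f b = x} = #{b ∈ t | f b = x} := by
  classical
  let values : Finset γ := insert x ((s ∪ t).image f)
  have hmem (b : β) (hb : b ∈ s ∪ t) : f b ∈ values :=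
    mem_insert_of_mem (mem_image_of_mem f hb)
  rw [card_eq_sum_card_fiberwise fun b hb => hmem b (mem_union_left t hb),
    card_eq_sum_card_fiberwise fun b hb => hmem b (mem_union_right s hb)] at heq
  exact (sum_eq_sum_iff_of_le fun x _ => hle x).1 heq x (mem_insert_self x _)

lemma apply_perm_eq_of_le [Finite β] {n : ℕ} {f : β → Fin n} {σ τ : Equiv.Perm β}
    (h : ∀ b, f (σ b) ≤ f (τ b)) (b : β) : f (σ b) = f (τ b) := by
  cases nonempty_fintype β
  have hsum : ∑ b, (f (σ b) : ℕ) = ∑ b, (f (τ b) : ℕ) :=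
    (Equiv.sum_comp σ fun b => (f b : ℕ)).trans (Equiv.sum_comp τ fun b => (f b : ℕ)).symm
  exact Fin.ext ((sum_eq_sum_iff_of_le fun b _ => Fin.le_def.1 (h b)).1 hsum b (mem_univ b))

section Chain

variable [Fintype β] {k n : ℕ} {f : β → γ} {l : β → Fin k} {c : β → Fin n}

lemma card_chain_le [DecidableEq γ] {σ : Equiv.Perm β}
    (hchain : ∀ b b', f b = f b' → l b < l b' → c b < c b') (hσ : ∀ b, f (σ b) = f b)
    (x : Fin k) (y : Fin n) (z : γ) :
    #{b | (l (σ b) ≤ x ∧ c b ≤ y) ∧ f b = z} ≤ #{b | (l b ≤ x ∧ c b ≤ y) ∧ f b = z} := by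
  by_cases hall : ∀ b, f b = z → l b ≤ x → c b ≤ y
  · refine card_le_card_of_injOn σ (fun b hb => ?_) σ.injective.injOn
    simp only [coe_filter, mem_univ, true_and, Set.mem_ofPred_eq] at hb ⊢
    have hz : f (σ b) = z := (hσ b).trans hb.2
    exact ⟨⟨hb.1.1, hall _ hz hb.1.1⟩, hz⟩
  · push Not at hall
    obtain ⟨e, hez, hex, hey⟩ := hall
    refine card_le_card fun b hb => ?_
    simp only [mem_filter, mem_univ, true_and] at hb ⊢
    refine ⟨⟨?_, hb.1.2⟩, hb.2⟩
    by_contra! hx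
    exact (hchain e b (hez.trans hb.2.symm) (hex.trans_lt hx)).not_ge (hb.1.2.trans hey.le)

theorem apply_perm_eq_of_card_chain_eq {τ τ' : Equiv.Perm β}
    (hchain : ∀ b b', f b = f b' → l b < l b' → c b < c b') (hτ : ∀ b, f (τ b) = f (τ' b))
    (hcard : ∀ x y, #{b | l (τ b) ≤ x ∧ c (τ' b) ≤ y} = #{b | l b ≤ x ∧ c b ≤ y}) (b : β) :
    l (τ b) = l (τ' b) := by
  classical
  let σ : Equiv.Perm β := τ'.symm.trans τ
  have hσ (b : β) : f (σ b) = f b := by simp [σ, hτ]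
  have htotal (x : Fin k) (y : Fin n) :
      #{b | l (σ b) ≤ x ∧ c b ≤ y} = #{b | l b ≤ x ∧ c b ≤ y} := by
    rw [← hcard x y]
    have hmem (b : β) : b ∈ ({b | l (τ b) ≤ x ∧ c (τ' b) ≤ y} : Finset β) ↔
        τ' b ∈ ({b | l (σ b) ≤ x ∧ c b ≤ y} : Finset β) := by
      rw [mem_filter_univ, mem_filter_univ, Equiv.trans_apply, Equiv.symm_apply_apply]
    exact (card_equiv τ' hmem).symm
  have hclass (x : Fin k) (y : Fin n) (z : γ) :
      #{b | (l (σ b) ≤ x ∧ c b ≤ y) ∧ f b = z} = #{b | (l b ≤ x ∧ c b ≤ y) ∧ f b = z} := by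
    simpa only [filter_filter] using card_fiber_eq_of_le f (fun z => by
      simpa only [filter_filter] using card_chain_le hchain hσ x y z) (htotal x y) z
  have hle (b : β) : l (σ b) ≤ l b := by
    have hsub : ({a | (l (σ a) ≤ l b ∧ c a ≤ c b) ∧ f a = f b} : Finset β) ⊆
        ({a | (l a ≤ l b ∧ c a ≤ c b) ∧ f a = f b} : Finset β) := fun a ha => by
      simp only [mem_filter_univ] at ha ⊢
      exact ⟨⟨le_of_not_gt fun h => (hchain b a ha.2.symm h).not_ge ha.1.2, ha.1.2⟩, ha.2⟩
    have hb : b ∈ ({a | (l (σ a) ≤ l b ∧ c a ≤ c b) ∧ f a = f b} : Finset β) := by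
      rw [eq_of_subset_of_card_le hsub (hclass (l b) (c b) (f b)).ge]
      exact mem_filter_univ b |>.2 ⟨⟨le_rfl, le_rfl⟩, rfl⟩
    exact ((mem_filter_univ b).1 hb).1.1
  simpa [σ] using apply_perm_eq_of_le (τ := 1) hle (τ' b)

end Chain

section Corner

variable {s : Finset β} {p q : β → ℕ} {l : β → γ} {c : β → δ} {P Q : ℕ}

lemma card_corner_le_cover [DecidableEq γ] [DecidableEq δ] (X : Finset γ) (Y : Finset δ) :
    #{b ∈ s | q b < Q ∧ p b < P} ≤ #{b ∈ s | p b < P ∧ l b ∈ X} + #{b ∈ s | q b < Q ∧ c b ∈ Y} +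
      #{b ∈ s | l b ∉ X ∧ c b ∉ Y} ∧
    (#{b ∈ s | q b < Q ∧ p b < P} = #{b ∈ s | p b < P ∧ l b ∈ X} + #{b ∈ s | q b < Q ∧ c b ∈ Y} +
      #{b ∈ s | l b ∉ X ∧ c b ∉ Y} → ∀ b ∈ s, q b < Q → P ≤ p b → l b ∈ X) := by
  have hpointwise (b : β) : (if q b < Q ∧ p b < P then 1 else 0) ≤
      (if p b < P ∧ l b ∈ X then 1 else 0) + (if q b < Q ∧ c b ∈ Y then 1 else 0) +
        (if l b ∉ X ∧ c b ∉ Y then 1 else 0) := by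
    by_cases hX : l b ∈ X <;> by_cases hY : c b ∈ Y <;> by_cases hp : p b < P <;>
      by_cases hq : q b < Q <;> simp [hX, hY, hp, hq]
  simp only [card_filter, ← sum_add_distrib]
  refine ⟨sum_le_sum fun b _ => hpointwise b, fun heq b hb hq hp => ?_⟩
  have := (sum_eq_sum_iff_of_le fun b _ => hpointwise b).1 heq b hb
  by_contra hX
  by_cases hY : c b ∈ Y <;> simp [hX, hY, hq, hp.not_gt] at this

/-- The columns of the first tableau which contain a box of `s` in a row `p ≥ P` whose content
`q - p` is smaller than `Q - P`. -/
def lowColumns [Fintype γ] [DecidableEq γ] (s : Finset β) (p q : β → ℕ) (l : β → γ) (P Q : ℕ) :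
    Finset γ := {x | ∃ b ∈ s, l b = x ∧ P ≤ p b ∧ q b + P < Q + p b}

/-- The columns of the second tableau in which all boxes of `s` in rows `q < Q` have content `q - p`
at least `Q - P`. -/
def highColumns [Fintype δ] [DecidableEq δ] (s : Finset β) (p q : β → ℕ) (c : β → δ) (P Q : ℕ) :
    Finset δ := {y | ∀ b ∈ s, c b = y → q b < Q → Q + p b ≤ q b + P}

lemma cover_le_card_corner [Fintype γ] [DecidableEq γ] [Fintype δ] [DecidableEq δ]
    (hl : ∀ b ∈ s, ∀ b' ∈ s, l b = l b' → p b ≤ p b' → q b + p b' ≤ q b' + p b)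
    (hc : ∀ b ∈ s, ∀ b' ∈ s, c b = c b' → q b ≤ q b' → p b + q b' ≤ p b' + q b) :
    #{b ∈ s | p b < P ∧ l b ∈ lowColumns s p q l P Q} +
        #{b ∈ s | q b < Q ∧ c b ∈ highColumns s p q c P Q} +
        #{b ∈ s | l b ∉ lowColumns s p q l P Q ∧ c b ∉ highColumns s p q c P Q} ≤
      #{b ∈ s | q b < Q ∧ p b < P} := by
  simp only [card_filter, ← sum_add_distrib]
  refine sum_le_sum fun b hb => ?_
  have hlow (h : l b ∈ lowColumns s p q l P Q) (hp : p b < P) : q b + P < Q + p b := by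
    obtain ⟨e, he, hle, hPe, hlt⟩ := (mem_filter.1 h).2
    have := hl b hb e he hle.symm (hp.le.trans hPe)
    omega
  have hhigh (h : c b ∈ highColumns s p q c P Q) (hq : q b < Q) : Q + p b ≤ q b + P :=
    (mem_filter.1 h).2 b hb rfl hq
  have hneither (hX : l b ∉ lowColumns s p q l P Q) (hY : c b ∉ highColumns s p q c P Q) :
      q b < Q ∧ p b < P := by
    simp only [lowColumns, highColumns, mem_filter, mem_univ, true_and] at hX hY
    push Not at hX hY
    obtain ⟨e, he, hce, hqe, hlt⟩ := hY
    have hp := hX b hb rfl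
    have hq := hc e he b hb hce
    omega
  split_ifs <;> first | omega | grind

theorem card_corner_le [Fintype γ] [DecidableEq γ] [Finite δ] [DecidableEq δ] {p' q' : β → ℕ}
    (hl : ∀ b ∈ s, ∀ b' ∈ s, l b = l b' → p b ≤ p b' → q b + p b' ≤ q b' + p b)
    (hc : ∀ b ∈ s, ∀ b' ∈ s, c b = c b' → q b ≤ q b' → p b + q b' ≤ p b' + q b)
    (hp : ∀ x, #{b ∈ s | p' b < P ∧ l b = x} ≤ #{b ∈ s | p b < P ∧ l b = x})
    (hq : ∀ y, #{b ∈ s | q' b < Q ∧ c b = y} ≤ #{b ∈ s | q b < Q ∧ c b = y}) :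
    #{b ∈ s | q' b < Q ∧ p' b < P} ≤ #{b ∈ s | q b < Q ∧ p b < P} ∧
    (#{b ∈ s | q' b < Q ∧ p' b < P} = #{b ∈ s | q b < Q ∧ p b < P} →
      ∀ b ∈ s, q' b < Q → P ≤ p' b → l b ∈ lowColumns s p q l P Q) := by
  cases nonempty_fintype δ
  set X := lowColumns s p q l P Q with hX
  set Y := highColumns s p q c P Q with hY
  have hlow : #{b ∈ s | p' b < P ∧ l b ∈ X} ≤ #{b ∈ s | p b < P ∧ l b ∈ X} := by
    simpa only [card_filter_and_mem_eq_sum] using sum_le_sum fun x _ => hp x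
  have hhigh : #{b ∈ s | q' b < Q ∧ c b ∈ Y} ≤ #{b ∈ s | q b < Q ∧ c b ∈ Y} := by
    simpa only [card_filter_and_mem_eq_sum] using sum_le_sum fun y _ => hq y
  have hcover := cover_le_card_corner (P := P) (Q := Q) hl hc
  rw [← hX, ← hY] at hcover
  obtain ⟨hle, htight⟩ := card_corner_le_cover (s := s) (p := p') (q := q') (l := l) (c := c)
    (P := P) (Q := Q) X Y
  exact ⟨by omega, fun heq => htight (by omega)⟩

end Corner

end Counting

section Columns

open Finset

variable {β : Type*} [Fintype β] {K m n k : ℕ}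

/-- One of the two tableaux of a linked pair, given by functions on the common set `β` of boxes: the
box `b` lies in row `row b` and column `col b` and has label `(arrow b, entry b)`. Columns are
standard in the sense that, going down, the arrow increases weakly and, as long as the arrow is
constant, the entry increases at least as fast as the row. -/
structure IsColumnStandard (arrow : β → Fin K) (row : β → Fin m) (entry : β → Fin n)
    (col : β → Fin k) : Prop where
  arrow_le : ∀ {b b'}, col b = col b' → row b ≤ row b' → arrow b ≤ arrow b'
  entry_add_row_le : ∀ {b b'}, arrow b = arrow b' → col b = col b' → row b ≤ row b' →
    (entry b + row b' : ℕ) ≤ entry b' + row b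
  eq_of_row_eq : ∀ {b b'}, col b = col b' → row b = row b' → b = b'

namespace IsColumnStandard

variable {arrow : β → Fin K} {row : β → Fin m} {entry : β → Fin n} {col : β → Fin k}
  {τ : Equiv.Perm β}

lemma card_col_le (h : IsColumnStandard arrow row entry col) (hτ : ∀ b, col (τ b) = col b)
    {D : Finset (Fin K)} (hD : IsLowerSet (D : Set (Fin K))) (P : ℕ) (x : Fin k) :
    #{b | ((row (τ b) : ℕ) < P ∧ arrow b ∈ D) ∧ col b = x} ≤
      #{b | ((row b : ℕ) < P ∧ arrow b ∈ D) ∧ col b = x} := by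
  by_cases hall : ∀ b, col b = x → arrow b ∈ D → (row b : ℕ) < P
  · refine card_le_card fun b hb => ?_
    simp only [mem_filter, mem_univ, true_and] at hb ⊢
    exact ⟨⟨hall b hb.2 hb.1.2, hb.1.2⟩, hb.2⟩
  · push Not at hall
    obtain ⟨e, hex, heD, heP⟩ := hall
    refine card_le_card_of_injOn τ (fun b hb => ?_) τ.injective.injOn
    simp only [coe_filter, mem_univ, true_and, Set.mem_ofPred_eq] at hb ⊢
    have hcol : col (τ b) = x := (hτ b).trans hb.2
    have hrow : row (τ b) ≤ row e := hb.1.1.le.trans heP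
    exact ⟨⟨hb.1.1, hD (h.arrow_le (hcol.trans hex.symm) hrow) heD⟩, hcol⟩

lemma card_col_eq (h : IsColumnStandard arrow row entry col) (hτ : ∀ b, col (τ b) = col b)
    {D : Finset (Fin K)} (hD : IsLowerSet (D : Set (Fin K))) {P : ℕ}
    (htotal : #{b | (row (τ b) : ℕ) < P ∧ arrow b ∈ D} = #{b | (row b : ℕ) < P ∧ arrow b ∈ D})
    (x : Fin k) :
    #{b | ((row (τ b) : ℕ) < P ∧ arrow b ∈ D) ∧ col b = x} =
      #{b | ((row b : ℕ) < P ∧ arrow b ∈ D) ∧ col b = x} := by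
  simp only [← filter_filter (fun b => _ ∧ arrow b ∈ D)]
  refine card_fiber_eq_of_le col (fun x => ?_) htotal x
  simpa only [filter_filter] using h.card_col_le hτ hD P x

lemma card_arrow_col_le (h : IsColumnStandard arrow row entry col) (hτ : ∀ b, col (τ b) = col b)
    {I : Fin K} {P : ℕ}
    (htotal : #{b | (row (τ b) : ℕ) < P ∧ arrow b ∈ Iio I} =
      #{b | (row b : ℕ) < P ∧ arrow b ∈ Iio I}) (x : Fin k) :
    #{b | arrow b = I ∧ (row (τ b) : ℕ) < P ∧ col b = x} ≤
      #{b | arrow b = I ∧ (row b : ℕ) < P ∧ col b = x} := by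
  have hsplit (f : β → ℕ) : #{b | (f b < P ∧ arrow b ∈ Iic I) ∧ col b = x} =
      #{b | arrow b = I ∧ f b < P ∧ col b = x} +
        #{b | (f b < P ∧ arrow b ∈ Iio I) ∧ col b = x} := by
    classical
    have hdisj : Disjoint ({b | arrow b = I ∧ f b < P ∧ col b = x} : Finset β)
        ({b | (f b < P ∧ arrow b ∈ Iio I) ∧ col b = x} : Finset β) :=
      disjoint_filter.2 fun b _ hI hlt => (mem_Iio.1 hlt.1.2).ne hI.1
    rw [← card_union_of_disjoint hdisj, ← filter_or]
    refine congrArg card (filter_congr fun b _ => ?_)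
    rw [mem_Iic, mem_Iio, le_iff_eq_or_lt]
    tauto
  have hIic := h.card_col_le hτ (D := Iic I) (by simpa using isLowerSet_Iic I) P x
  have hIio := h.card_col_eq hτ (D := Iio I) (by simpa using isLowerSet_Iio I) htotal x
  rw [hsplit, hsplit, hIio] at hIic
  exact Nat.le_of_add_le_add_right hIic

/-- If the arrow of some `τ b` exceeded that of `b`, then counting the boxes in rows above `τ b` of
that column would contradict `card_col_eq`. -/
lemma arrow_perm_eq (h : IsColumnStandard arrow row entry col) (hτ : ∀ b, col (τ b) = col b)
    (htotal : ∀ I P, #{b | (row (τ b) : ℕ) < P ∧ arrow b ∈ Iic I} =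
      #{b | (row b : ℕ) < P ∧ arrow b ∈ Iic I}) (b : β) : arrow (τ b) = arrow b := by
  refine apply_perm_eq_of_le (τ := 1) (fun b => ?_) b
  by_contra! hlt
  rw [Equiv.Perm.one_apply] at hlt
  have hcard := h.card_col_eq hτ (by simpa using isLowerSet_Iic _)
    (htotal (arrow b) (row (τ b))) (col b)
  refine hcard.not_lt (card_lt_card ((ssubset_iff_of_subset fun e he => ?_).2 ⟨b, ?_, ?_⟩))
  · simp only [mem_filter, mem_univ, true_and, mem_Iic] at he ⊢
    refine ⟨⟨?_, he.1.2⟩, he.2⟩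
    by_contra! hrow
    exact (he.1.2.trans_lt hlt).not_ge (h.arrow_le ((hτ b).trans he.2.symm) hrow)
  · simp only [mem_filter, mem_univ, true_and, mem_Iic]
    refine ⟨⟨?_, le_rfl⟩, trivial⟩
    by_contra! hrow
    exact hlt.not_ge (h.arrow_le (hτ b) hrow)
  · simp

end IsColumnStandard

end Columns

section BoxVariables

open Finset

variable {β : Type*} [Fintype β] {K r0 r1 cm cp : ℕ}

/-- The variable contributed by the box `b`, whose label in `T⁻` is `(arrow b, rowP b)` and whose
label in `T⁺` is `(arrow b, rowM b)`, after the two tableaux are permuted by `τm` and `τp`. -/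
def boxVar (arrow : β → Fin K) (rowM : β → Fin r0) (rowP : β → Fin r1) (τm τp : Equiv.Perm β)
    (b : β) : KVar K r0 r1 := (arrow b, rowP (τp b), rowM (τm b))

variable {arrow : β → Fin K} {rowM : β → Fin r0} {rowP : β → Fin r1} {colM : β → Fin cm}
  {colP : β → Fin cp} {τm τp : Equiv.Perm β}

lemma card_boxVar_swap (w : KVar K r1 r0) :
    #{b | boxVar arrow rowP rowM τp τm b = w} =
      #{b | boxVar arrow rowM rowP τm τp b = (w.1, w.2.2, w.2.1)} := by
  refine congrArg card (filter_congr fun b _ => ?_)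
  simp only [boxVar, Prod.ext_iff]
  tauto

lemma IsColumnStandard.card_arrow_col_boxVar_le
    (hM : IsColumnStandard arrow rowM rowP colM) (hτm : ∀ b, colM (τm b) = colM b) {I : Fin K}
    (hI : ∀ w : KVar K r0 r1, w.1 < I →
      #{b | boxVar arrow rowM rowP τm τp b = w} = #{b | boxVar arrow rowM rowP 1 1 b = w})
    (P : ℕ) (x : Fin cm) :
    #{b | arrow b = I ∧ (rowM (τm b) : ℕ) < P ∧ colM b = x} ≤
      #{b | arrow b = I ∧ (rowM b : ℕ) < P ∧ colM b = x} := by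
  refine hM.card_arrow_col_le hτm ?_ x
  have := card_filter_mem_eq_of_fiberwise
    (t := {w : KVar K r0 r1 | (w.2.2 : ℕ) < P ∧ w.1 ∈ Iio I})
    fun w hw => hI w (mem_Iio.1 (mem_filter.1 hw).2.2)
  simpa only [boxVar, mem_filter, mem_univ, true_and, Equiv.Perm.one_apply] using this

theorem card_arrow_corner_le (hM : IsColumnStandard arrow rowM rowP colM)
    (hP : IsColumnStandard arrow rowP rowM colP) (hτm : ∀ b, colM (τm b) = colM b)
    (hτp : ∀ b, colP (τp b) = colP b) {I : Fin K}
    (hI : ∀ w : KVar K r0 r1, w.1 < I →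
      #{b | boxVar arrow rowM rowP τm τp b = w} = #{b | boxVar arrow rowM rowP 1 1 b = w})
    (P Q : ℕ) :
    #{b | arrow b = I ∧ (rowP (τp b) : ℕ) < Q ∧ (rowM (τm b) : ℕ) < P} ≤
      #{b | arrow b = I ∧ (rowP b : ℕ) < Q ∧ (rowM b : ℕ) < P} ∧
    (#{b | arrow b = I ∧ (rowP (τp b) : ℕ) < Q ∧ (rowM (τm b) : ℕ) < P} =
        #{b | arrow b = I ∧ (rowP b : ℕ) < Q ∧ (rowM b : ℕ) < P} →
      ∀ b, arrow b = I → (rowP (τp b) : ℕ) < Q → P ≤ rowM (τm b) →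
        ∃ e, arrow e = I ∧ colM e = colM b ∧ P ≤ rowM e ∧ (rowP e + P : ℕ) < Q + rowM e) := by
  have hIswap (w : KVar K r1 r0) (hw : w.1 < I) :
      #{b | boxVar arrow rowP rowM τp τm b = w} = #{b | boxVar arrow rowP rowM 1 1 b = w} :=
    (card_boxVar_swap w).trans ((hI (w.1, w.2.2, w.2.1) hw).trans (card_boxVar_swap w).symm)
  have hcorner := card_corner_le (s := {b | arrow b = I}) (p := fun b => rowM b)
    (q := fun b => rowP b) (p' := fun b => rowM (τm b)) (q' := fun b => rowP (τp b)) (l := colM)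
    (c := colP) (P := P) (Q := Q)
    (fun b hb b' hb' =>
      hM.entry_add_row_le ((mem_filter.1 hb).2.trans (mem_filter.1 hb').2.symm))
    (fun b hb b' hb' =>
      hP.entry_add_row_le ((mem_filter.1 hb).2.trans (mem_filter.1 hb').2.symm))
    (by simpa only [filter_filter] using hM.card_arrow_col_boxVar_le hτm hI P)
    (by simpa only [filter_filter] using hP.card_arrow_col_boxVar_le hτp hIswap Q)
  simpa only [filter_filter, lowColumns, mem_filter, mem_univ, true_and, and_assoc] using hcorner

theorem card_boxVar_le (hM : IsColumnStandard arrow rowM rowP colM)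
    (hP : IsColumnStandard arrow rowP rowM colP) (hτm : ∀ b, colM (τm b) = colM b)
    (hτp : ∀ b, colP (τp b) = colP b) {v : KVar K r0 r1}
    (hv : ∀ w, VarGT w v →
      #{b | boxVar arrow rowM rowP τm τp b = w} = #{b | boxVar arrow rowM rowP 1 1 b = w}) :
    #{b | boxVar arrow rowM rowP τm τp b = v} ≤ #{b | boxVar arrow rowM rowP 1 1 b = v} := by
  let C : Finset (KVar K r0 r1) :=
    {w | w.1 = v.1 ∧ (w.2.1 : ℕ) < v.2.1 + 1 ∧ (w.2.2 : ℕ) < v.2.2 + 1}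
  have hvC : v ∈ C := by simp [C]
  have hsum (σm σp : Equiv.Perm β) : #{b | arrow b = v.1 ∧ (rowP (σp b) : ℕ) < v.2.1 + 1 ∧
      (rowM (σm b) : ℕ) < v.2.2 + 1} = #{b | boxVar arrow rowM rowP σm σp b = v} +
        ∑ w ∈ C.erase v, #{b | boxVar arrow rowM rowP σm σp b = w} := by
    rw [add_sum_erase _ (fun w => #{b | boxVar arrow rowM rowP σm σp b = w}) hvC,
      sum_card_fiberwise_eq_card_filter]
    simp only [C, boxVar, mem_filter, mem_univ, true_and]
  have hcorner := (hsum τm τp).symm.trans_le <|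
    (card_arrow_corner_le hM hP hτm hτp (fun w hw => hv w (Or.inl hw))
      (v.2.2 + 1) (v.2.1 + 1)).1.trans_eq (hsum 1 1)
  rw [sum_congr rfl fun w hw => hv w ?_] at hcorner
  · exact Nat.le_of_add_le_add_right hcorner
  · obtain ⟨hne, hwC⟩ := mem_erase.1 hw
    obtain ⟨hI, hQ, hP⟩ := (mem_filter.1 hwC).2
    simp only [ne_eq, Prod.ext_iff, Fin.ext_iff] at hne hI
    simp only [VarGT, Fin.lt_def, Fin.ext_iff]
    omega

section Tie

variable (hM : IsColumnStandard arrow rowM rowP colM) (hP : IsColumnStandard arrow rowP rowM colP)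
  (hτm : ∀ b, colM (τm b) = colM b) (hτp : ∀ b, colP (τp b) = colP b)
  (heq : ∀ w, #{b | boxVar arrow rowM rowP τm τp b = w} = #{b | boxVar arrow rowM rowP 1 1 b = w})

include hM hτm heq

lemma arrow_apply_perm_eq (b : β) : arrow (τm b) = arrow b := by
  refine hM.arrow_perm_eq hτm (fun I P => ?_) b
  have := card_filter_mem_eq_of_fiberwise
    (t := {w : KVar K r0 r1 | (w.2.2 : ℕ) < P ∧ w.1 ∈ Iic I}) fun w _ => heq w
  simpa only [boxVar, mem_filter, mem_univ, true_and, Equiv.Perm.one_apply] using this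

include hP hτp

lemma rowP_apply_perm_eq (b : β) : rowP (τm b) = rowP (τp b) := by
  refine apply_perm_eq_of_le (fun b => ?_) b
  have hcorner := card_filter_mem_eq_of_fiberwise (t := {w : KVar K r0 r1 | w.1 = arrow b ∧
    (w.2.1 : ℕ) < rowP (τp b) + 1 ∧ (w.2.2 : ℕ) < rowM (τm b)}) fun w _ => heq w
  simp only [boxVar, mem_filter, mem_univ, true_and, Equiv.Perm.one_apply] at hcorner
  obtain ⟨e, harrow, hcol, hrow, hlt⟩ := (card_arrow_corner_le hM hP hτm hτp
    (fun w _ => heq w) (rowM (τm b)) (rowP (τp b) + 1)).2 hcorner b rfl (Nat.lt_succ_self _) le_rfl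
  have := hM.entry_add_row_le ((arrow_apply_perm_eq hM hτm heq b).trans harrow.symm)
    ((hτm b).trans hcol.symm) hrow
  rw [Fin.le_def]
  omega

variable (hlink : ∀ b b', arrow b = arrow b' → rowM b = rowM b' → rowP b = rowP b' →
  colM b < colM b' → colP b < colP b')

include hlink

theorem perm_eq_of_card_boxVar_eq : τm = τp := by
  have heq' (w : KVar K r1 r0) :
      #{b | boxVar arrow rowP rowM τp τm b = w} = #{b | boxVar arrow rowP rowM 1 1 b = w} :=
    (card_boxVar_swap w).trans ((heq (w.1, w.2.2, w.2.1)).trans (card_boxVar_swap w).symm)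
  have hrowM (b : β) : rowM (τm b) = rowM (τp b) :=
    (rowP_apply_perm_eq hP hM hτp hτm heq' b).symm
  have hclass (b : β) : (arrow (τm b), rowM (τm b), rowP (τm b)) =
      (arrow (τp b), rowM (τp b), rowP (τp b)) := by
    rw [arrow_apply_perm_eq hM hτm heq, arrow_apply_perm_eq hP hτp heq', hrowM,
      rowP_apply_perm_eq hM hP hτm hτp heq]
  have hcol (b : β) : colM (τm b) = colM (τp b) := by
    refine apply_perm_eq_of_card_chain_eq (f := fun b => (arrow b, rowM b, rowP b))
      (c := colP) (fun b b' hbb' => ?_) hclass (fun x y => ?_) b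
    · simp only [Prod.mk.injEq] at hbb'
      exact hlink b b' hbb'.1 hbb'.2.1 hbb'.2.2
    · simp only [hτm, hτp]
  exact Equiv.ext fun b => hM.eq_of_row_eq (hcol b) (hrowM b)

end Tie

end BoxVariables

section MonomialOrder

variable {K r0 r1 : ℕ} {a b : KVar K r0 r1 →₀ ℕ}

/-- The exponent vector `a` as an element of a lexicographic power of `ℕ`, with the variables listed
in decreasing order. It makes the term order `MonLT` a linear order of the library. -/
def lexExponent (a : KVar K r0 r1 →₀ ℕ) : Lex (Fin K ×ₗ (Fin r1 ×ₗ Fin r0) → ℕ) :=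
  toLex fun v => a ((ofLex v).1, ofLex (ofLex v).2)

lemma lexExponent_injective : Function.Injective (lexExponent (K := K) (r0 := r0) (r1 := r1)) :=
  fun _ _ h => Finsupp.ext fun v => congrFun (toLex.injective h) (toLex (v.1, toLex v.2))

lemma monLT_iff_lexExponent_lt : MonLT a b ↔ lexExponent a < lexExponent b := by
  have hvar (v w : KVar K r0 r1) :
      VarGT v w ↔ toLex (v.1, toLex v.2) < toLex (w.1, toLex w.2) := by
    simp only [VarGT, Prod.Lex.toLex_lt_toLex]
  constructor
  · rintro ⟨v, hlt, heq⟩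
    exact ⟨toLex (v.1, toLex v.2), fun w hw => heq _ ((hvar _ v).2 hw), hlt⟩
  · rintro ⟨v, heq, hlt⟩
    exact ⟨((ofLex v).1, ofLex (ofLex v).2), hlt,
      fun w hw => heq (toLex (w.1, toLex w.2)) ((hvar w _).1 hw)⟩

lemma eq_or_monLT_of_not_monLT (h : ¬MonLT b a) : a = b ∨ MonLT a b := by
  rw [monLT_iff_lexExponent_lt] at h ⊢
  exact (not_lt.1 h).eq_or_lt.imp_left fun h => lexExponent_injective h

lemma IsLM.unique {f : KPoly K r0 r1} (ha : IsLM f a) (hb : IsLM f b) : a = b := by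
  obtain h | hba := ha.2 b hb.1
  · exact h.symm
  obtain h | hab := hb.2 a ha.1
  · exact h
  rw [monLT_iff_lexExponent_lt] at hba hab
  exact absurd hba hab.asymm

end MonomialOrder

section PairPolynomial

open Finset

lemma IsSemiStandardTab.strictMono_col {rows cols K n : ℕ}
    {T : Fin rows → Fin cols → Fin K × Fin n} (hT : IsSemiStandardTab T) (c : Fin cols) :
    StrictMono fun p => toLex (T p c) :=
  fun p p' h => Prod.Lex.toLex_lt_toLex.2 (hT.2 c p p' h)

lemma add_le_add_of_strictMono_toLex {rows K n : ℕ} {f : Fin rows → Fin K × Fin n}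
    (hf : StrictMono fun p => toLex (f p)) {p p' : Fin rows} (hp : p ≤ p')
    (heq : (f p).1 = (f p').1) : ((f p).2 + p' : ℕ) ≤ (f p').2 + p := by
  have hfst {x y : Fin rows} (h : x ≤ y) : (f x).1 ≤ (f y).1 :=
    Prod.Lex.monotone_fst _ _ (hf.monotone h)
  have hsnd : StrictMonoOn (fun x => (f x).2) (Set.Icc p p') := fun x hx y hy hxy => by
    have hxy1 : (f x).1 = (f y).1 :=
      (hfst hxy.le).antisymm ((hfst hy.2).trans (heq.symm.trans_le (hfst hx.1)))
    obtain h | ⟨-, h⟩ := Prod.Lex.toLex_lt_toLex.1 (hf hxy)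
    · exact absurd hxy1 h.ne
    · exact h
  have hcard : #(Ioc p p') ≤ #(Ioc (f p).2 (f p').2) := by
    refine card_le_card_of_injOn (fun x => (f x).2) (fun x hx => mem_Ioc.2 ?_)
      (hsnd.injOn.mono fun x hx => ?_)
    · have hx : p < x ∧ x ≤ p' := mem_Ioc.1 hx
      exact ⟨hsnd (Set.left_mem_Icc.2 hp) ⟨hx.1.le, hx.2⟩ hx.1,
        hsnd.monotoneOn ⟨hx.1.le, hx.2⟩ (Set.right_mem_Icc.2 hp) hx.2⟩
    · exact Set.Ioc_subset_Icc_self (mem_Ioc.1 hx)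
  rw [Fin.card_Ioc, Fin.card_Ioc] at hcard
  rw [Fin.le_def] at hp
  obtain heq | hlt := hp.eq_or_lt
  · rw [Fin.ext heq]
  · omega

lemma IsSemiStandardTab.isColumnStandard {rows cols K n : ℕ}
    {T : Fin rows → Fin cols → Fin K × Fin n} (hT : IsSemiStandardTab T) {β : Type*}
    {g : β → Fin rows × Fin cols} (hg : Function.Injective g) :
    IsColumnStandard (fun b => (T (g b).1 (g b).2).1) (fun b => (g b).1)
      (fun b => (T (g b).1 (g b).2).2) (fun b => (g b).2) where
  arrow_le {b b'} hcol hrow := by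
    rw [hcol]
    exact Prod.Lex.monotone_fst _ _ ((hT.strictMono_col _).monotone hrow)
  entry_add_row_le {b b'} harrow hcol hrow := by
    rw [hcol] at harrow ⊢
    exact add_le_add_of_strictMono_toLex (hT.strictMono_col _) hrow harrow
  eq_of_row_eq hcol hrow := hg (Prod.ext hrow hcol)

namespace LinkedPair

variable {K r0 r1 cm cp : ℕ} (L : LinkedPair K r0 r1 cm cp)

/-- The first component of the label of a box of `T⁻`, and of the linked box of `T⁺`. -/
def arrow (b : Fin r0 × Fin cm) : Fin K := (L.Tm b.1 b.2).1

/-- The action of an element of `G⁺` on the boxes of `T⁻`, transported along the link. -/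
def plusPerm (αp : Fin cp → Equiv.Perm (Fin r1)) : Equiv.Perm (Fin r0 × Fin cm) :=
  (L.link.trans (Equiv.prodCongrLeft αp)).trans L.link.symm

/-- The exponent vector of `Mon(α⁻ · α⁺ · T⁺)`. -/
noncomputable def termExp (αm : Fin cm → Equiv.Perm (Fin r0)) (αp : Fin cp → Equiv.Perm (Fin r1)) :
    KVar K r0 r1 →₀ ℕ :=
  ∑ b, Finsupp.single (boxVar L.arrow Prod.fst (fun b => (L.link b).1) (Equiv.prodCongrLeft αm)
    (L.plusPerm αp) b) 1

lemma link_plusPerm (αp : Fin cp → Equiv.Perm (Fin r1)) (b : Fin r0 × Fin cm) :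
    L.link (L.plusPerm αp b) = (αp (L.link b).2 (L.link b).1, (L.link b).2) :=
  L.link.apply_symm_apply _

lemma termExp_apply (αm : Fin cm → Equiv.Perm (Fin r0)) (αp : Fin cp → Equiv.Perm (Fin r1))
    (v : KVar K r0 r1) :
    L.termExp αm αp v = #{b | boxVar L.arrow Prod.fst (fun b => (L.link b).1)
      (Equiv.prodCongrLeft αm) (L.plusPerm αp) b = v} := by
  rw [termExp, Finsupp.finsetSum_apply, card_filter]
  simp only [Finsupp.single_apply]

lemma monExpM_apply (v : KVar K r0 r1) :
    monExpM L v = #{b | boxVar L.arrow Prod.fst (fun b => (L.link b).1) 1 1 b = v} := by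
  rw [monExpM, ← Fintype.sum_prod_type', Finsupp.finsetSum_apply, card_filter]
  simp only [Finsupp.single_apply, boxVar, arrow, Equiv.Perm.one_apply, L.link_row]

lemma termExp_one : L.termExp 1 1 = monExpM L := by
  rw [termExp, monExpM, ← Fintype.sum_prod_type']
  simp [boxVar, arrow, link_plusPerm, L.link_row]

lemma pairPoly_eq_sum_monomial : pairPoly L =
    ∑ α : (Fin cm → Equiv.Perm (Fin r0)) × (Fin cp → Equiv.Perm (Fin r1)),
      MvPolynomial.monomial (L.termExp α.1 α.2)
        (((∏ l, (Equiv.Perm.sign (α.1 l) : ℤ)) * ∏ c, (Equiv.Perm.sign (α.2 c) : ℤ) : ℤ) : ℂ) := by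
  rw [pairPoly, Fintype.sum_prod_type]
  refine sum_congr rfl fun αm _ => sum_congr rfl fun αp _ => ?_
  have hprod : ∏ p : Fin r0, ∏ l : Fin cm, (MvPolynomial.X
      ((L.Tm p l).1, αp (L.link (p, l)).2 (L.link (p, l)).1, αm l p) : KPoly K r0 r1) =
      MvPolynomial.monomial (L.termExp αm αp) 1 := by
    rw [termExp, MvPolynomial.monomial_sum_one, Fintype.prod_prod_type]
    simp only [boxVar, link_plusPerm]
    rfl
  rw [hprod, ← Int.cast_smul_eq_zsmul ℂ, MvPolynomial.smul_monomial, smul_eq_mul, mul_one]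

lemma sign_mul_sign_eq_one {αm : Fin cm → Equiv.Perm (Fin r0)} {αp : Fin cp → Equiv.Perm (Fin r1)}
    (h : Equiv.prodCongrLeft αm = L.plusPerm αp) :
    (∏ l, (Equiv.Perm.sign (αm l) : ℤ)) * ∏ c, (Equiv.Perm.sign (αp c) : ℤ) = 1 := by
  have hsign : ∏ l, Equiv.Perm.sign (αm l) = ∏ c, Equiv.Perm.sign (αp c) := by
    rw [← Equiv.Perm.sign_prodCongrLeft, ← Equiv.Perm.sign_prodCongrLeft, h]
    exact Equiv.Perm.sign_symm_trans_trans _ L.link.symm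
  rw [← Units.coe_prod, ← Units.coe_prod, hsign, ← Units.val_mul, Int.units_mul_self,
    Units.val_one]

variable {L} (hL : IsSemiStandardPair L)
include hL

lemma isColumnStandard_minus :
    IsColumnStandard L.arrow Prod.fst (fun b => (L.link b).1) Prod.snd := by
  have h := hL.1.isColumnStandard (g := (id : Fin r0 × Fin cm → _)) Function.injective_id
  simp only [id, ← L.link_row] at h
  exact h

lemma isColumnStandard_plus :
    IsColumnStandard L.arrow (fun b => (L.link b).1) Prod.fst fun b => (L.link b).2 := by
  have h := hL.2.1.isColumnStandard L.link.injective
  have hlabel (b : Fin r0 × Fin cm) : L.Tp (L.link b).1 (L.link b).2 = (L.arrow b, b.1) :=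
    L.link_label b.1 b.2
  simpa only [hlabel] using h

theorem termExp_eq_or_monLT (αm : Fin cm → Equiv.Perm (Fin r0))
    (αp : Fin cp → Equiv.Perm (Fin r1)) :
    L.termExp αm αp = monExpM L ∨ MonLT (L.termExp αm αp) (monExpM L) := by
  refine eq_or_monLT_of_not_monLT ?_
  rintro ⟨v, hlt, heq⟩
  simp only [termExp_apply, monExpM_apply] at hlt heq
  exact hlt.not_ge (card_boxVar_le (isColumnStandard_minus hL) (isColumnStandard_plus hL)
    (fun _ => rfl) (fun b => by rw [L.link_plusPerm]) fun w hw => (heq w hw).symm)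

theorem sign_mul_sign_eq_one_of_termExp_eq {αm : Fin cm → Equiv.Perm (Fin r0)}
    {αp : Fin cp → Equiv.Perm (Fin r1)} (heq : L.termExp αm αp = monExpM L) :
    (∏ l, (Equiv.Perm.sign (αm l) : ℤ)) * ∏ c, (Equiv.Perm.sign (αp c) : ℤ) = 1 := by
  refine L.sign_mul_sign_eq_one (perm_eq_of_card_boxVar_eq (isColumnStandard_minus hL)
    (isColumnStandard_plus hL) (fun _ => rfl) (fun b => by rw [L.link_plusPerm]) (fun w => ?_) ?_)
  · rw [← termExp_apply, ← monExpM_apply, heq]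
  · rintro ⟨p, c⟩ ⟨p', c'⟩ harrow rfl hrow hcol
    refine hL.2.2 p c c' (Prod.ext harrow ?_) hcol
    rw [← L.link_row, ← L.link_row]
    exact hrow

end LinkedPair

open LinkedPair in
theorem pairPoly_isLM {K r0 r1 cm cp : ℕ} {L : LinkedPair K r0 r1 cm cp}
    (hL : IsSemiStandardPair L) : IsLM (pairPoly L) (monExpM L) := by
  have hcoeff (m : KVar K r0 r1 →₀ ℕ) : MvPolynomial.coeff m (pairPoly L) =
      ∑ α : (Fin cm → Equiv.Perm (Fin r0)) × (Fin cp → Equiv.Perm (Fin r1)),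
        if L.termExp α.1 α.2 = m then (((∏ l, (Equiv.Perm.sign (α.1 l) : ℤ)) *
          ∏ c, (Equiv.Perm.sign (α.2 c) : ℤ) : ℤ) : ℂ) else 0 := by
    simp only [L.pairPoly_eq_sum_monomial, MvPolynomial.coeff_sum, MvPolynomial.coeff_monomial]
  refine ⟨?_, fun m hm => ?_⟩
  · have hterm (α : (Fin cm → Equiv.Perm (Fin r0)) × (Fin cp → Equiv.Perm (Fin r1))) :
        (if L.termExp α.1 α.2 = monExpM L then (((∏ l, (Equiv.Perm.sign (α.1 l) : ℤ)) *
          ∏ c, (Equiv.Perm.sign (α.2 c) : ℤ) : ℤ) : ℂ) else 0) =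
        if L.termExp α.1 α.2 = monExpM L then 1 else 0 := by
      split_ifs with h
      · rw [sign_mul_sign_eq_one_of_termExp_eq hL h, Int.cast_one]
      · rfl
    rw [MvPolynomial.mem_support_iff, hcoeff, sum_congr rfl fun α _ => hterm α, sum_boole,
      Nat.cast_ne_zero, ← Nat.pos_iff_ne_zero, card_pos]
    exact ⟨1, by simpa using L.termExp_one⟩
  · rw [MvPolynomial.mem_support_iff, hcoeff] at hm
    obtain ⟨α, -, hα⟩ := exists_ne_zero_of_sum_ne_zero hm
    rw [← (ite_ne_right_iff.1 hα).1]
    exact termExp_eq_or_monLT hL α.1 α.2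

end PairPolynomial

section Primitive

variable {K r0 r1 cm cp : ℕ}

lemma degree_monExpM (L : LinkedPair K r0 r1 cm cp) : (monExpM L).degree = r0 * cm := by
  simp [monExpM]

/-- The exponent vectors of the leading monomials of the semi-invariants of primitive pairs. -/
def primitiveExponents (K r0 r1 : ℕ) : Set (KVar K r0 r1 →₀ ℕ) :=
  {m | ∃ (sh : ℕ × ℕ) (L : LinkedPair K r0 r1 sh.1 sh.2), IsPrimitive L ∧ IsLM (pairPoly L) m}

lemma exists_monExpM_add_of_not_isPrimitive {L : LinkedPair K r0 r1 cm cp}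
    (hL : IsSemiStandardPair L) (hcm : 0 < cm) (hprim : ¬IsPrimitive L) :
    ∃ (cm1 cp1 cm2 cp2 : ℕ) (L1 : LinkedPair K r0 r1 cm1 cp1) (L2 : LinkedPair K r0 r1 cm2 cp2),
      0 < cm1 ∧ 0 < cm2 ∧ IsSemiStandardPair L1 ∧ IsSemiStandardPair L2 ∧
        monExpM L = monExpM L1 + monExpM L2 := by
  obtain ⟨cm1, cp1, cm2, cp2, L1, L2, m, m1, m2, hcm1, hcm2, hL1, hL2, hm, hm1, hm2, rfl⟩ :=
    not_not.1 fun h => hprim ⟨hL, hcm, h⟩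
  refine ⟨cm1, cp1, cm2, cp2, L1, L2, hcm1, hcm2, hL1, hL2, ?_⟩
  rw [hm1.unique (pairPoly_isLM hL1), hm2.unique (pairPoly_isLM hL2)] at hm
  exact (pairPoly_isLM hL).unique hm

theorem monExpM_mem_closure_primitiveExponents (h0 : 1 ≤ r0) (L : LinkedPair K r0 r1 cm cp)
    (hL : IsSemiStandardPair L) :
    monExpM L ∈ AddSubmonoid.closure (primitiveExponents K r0 r1) := by
  induction cm using Nat.strong_induction_on generalizing cp with
  | _ cm ih =>
    obtain rfl | hcm := Nat.eq_zero_or_pos cm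
    · have : monExpM L = 0 := by simp [monExpM]
      exact this ▸ zero_mem _
    by_cases hprim : IsPrimitive L
    · exact AddSubmonoid.subset_closure ⟨(cm, cp), L, hprim, pairPoly_isLM hL⟩
    obtain ⟨cm1, cp1, cm2, cp2, L1, L2, hcm1, hcm2, hL1, hL2, hsum⟩ :=
      exists_monExpM_add_of_not_isPrimitive hL hcm hprim
    have hdegree := congrArg Finsupp.degree hsum
    rw [map_add, degree_monExpM, degree_monExpM, degree_monExpM, ← Nat.mul_add] at hdegree
    have hcm_eq : cm = cm1 + cm2 := Nat.eq_of_mul_eq_mul_left h0 hdegree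
    rw [hsum]
    exact add_mem (ih cm1 (by omega) L1 hL1) (ih cm2 (by omega) L2 hL2)

end Primitive

/-- The semi-invariants attached to primitive semi-standard
linked tableaux pairs form a (possibly infinite) SAGBI basis of the
semi-invariant ring: the leading monomial of every nonzero element of the
semi-invariant ring is a finite product of leading monomials of semi-invariants
of primitive semi-standard linked tableaux pairs. -/
theorem statement12 (K r0 r1 : ℕ) (hK : 1 ≤ K) (h0 : 1 ≤ r0) (h1 : 1 ≤ r1)
    (f : KPoly K r0 r1) (hf : f ∈ semiInvariantRing K r0 r1) (hf0 : f ≠ 0)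
    (mo : KVar K r0 r1 →₀ ℕ) (hmo : IsLM f mo) :
    ∃ (n : ℕ) (sh : Fin n → ℕ × ℕ)
      (Ls : (i : Fin n) → LinkedPair K r0 r1 (sh i).1 (sh i).2)
      (ms : Fin n → (KVar K r0 r1 →₀ ℕ)),
      (∀ i, IsPrimitive (Ls i)) ∧ (∀ i, IsLM (pairPoly (Ls i)) (ms i)) ∧
      mo = ∑ i, ms i := by
  obtain ⟨cm, cp, L, hL, rfl⟩ := exists_isSemiStandardPair_monExpM_eq h0 h1
    (isDominant_minusVar hf hmo) (isDominant_plusVar hf hmo)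
  obtain ⟨factors, hprim, hsum⟩ :=
    AddSubmonoid.exists_list_of_mem_closure (monExpM_mem_closure_primitiveExponents h0 L hL)
  choose sh Ls hLs hLM using fun i => hprim _ (factors.get_mem i)
  exact ⟨factors.length, sh, Ls, factors.get, hLs, hLM,
    hsum.symm.trans (Fin.sum_univ_getElem factors).symm⟩

end QuiverSAGBI
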